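/- Let d ≥ 2, q > 2, T > 0, and λ₀, λ₁, λ₂ ∈ 2^ℤ. Then ‖ |D| K P_{λ₀} 𝓡 · ( u_{λ₁} 𝓡 √K v_{λ₂} ) ‖_{L^1_T L^2_x} ≲ T^{1−1/q} · min(⟨λ₁⟩, ⟨λ₂⟩)^{d/2 − 1/(2q)} · ⟨λ₂⟩^{−1/2} · ‖u‖_{X_{λ₁}} ‖v‖_{X_{λ₂}} for all u ∈ X_{λ₁} and v ∈ X_{λ₂}, where u_{λ} = P_λ u, and the implicit constant is independent of T and the λ's. -/

import Mathlib

noncomputable section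

open MeasureTheory Complex Real
open scoped FourierTransform ENNReal

/-- Euclidean space `ℝ^d`. -/
abbrev Euc (d : ℕ) := EuclideanSpace ℝ (Fin d)

/-- Japanese bracket `⟨x⟩ = (1+|x|²)^{1/2}`. -/
def jap (x : ℝ) : ℝ := Real.sqrt (1 + x ^ 2)

/-- The symbol `m_β(r) = √(r(1+βr²)tanh r)`. -/
def mSymb (β r : ℝ) : ℝ := Real.sqrt (r * (1 + β * r ^ 2) * Real.tanh r)

/-- The constant `c_{β,d}(λ) = λ^{d/2-1}⟨√β λ⟩^{-d/2}⟨λ⟩^{d/4+1}`. -/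
def cFactor (β : ℝ) (d : ℕ) (lam : ℝ) : ℝ :=
  lam ^ ((d : ℝ) / 2 - 1) * jap (Real.sqrt β * lam) ^ (-(d : ℝ) / 2) *
    jap lam ^ ((d : ℝ) / 4 + 1)

/-- `χ ∈ C_0^∞(ℝ)`, `0 ≤ χ ≤ 1`, `χ ≡ 1` on `[-1,1]`, `supp χ ⊆ [-2,2]`. -/
def IsCutoff (χ : ℝ → ℝ) : Prop :=
  ContDiff ℝ (⊤ : ℕ∞) χ ∧ HasCompactSupport χ ∧ (∀ s, 0 ≤ χ s ∧ χ s ≤ 1) ∧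
    (∀ s ∈ Set.Icc (-1 : ℝ) 1, χ s = 1) ∧ Function.support χ ⊆ Set.Icc (-2 : ℝ) 2

/-- `ρ(s) = χ(s) - χ(2s)`. -/
def rho (χ : ℝ → ℝ) (s : ℝ) : ℝ := χ s - χ (2 * s)

/-- Fourier multiplier operator with symbol `m`. -/
def mulOp {d : ℕ} (m : Euc d → ℂ) (f : Euc d → ℂ) : Euc d → ℂ :=
  𝓕⁻ fun ξ => m ξ * 𝓕 f ξ

/-- The Littlewood–Paley type projection `P_λ` with multiplier `ρ(|ξ|/λ)`. -/
def proj {d : ℕ} (χ : ℝ → ℝ) (lam : ℝ) (f : Euc d → ℂ) : Euc d → ℂ :=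
  mulOp (fun ξ => (rho χ (‖ξ‖ / lam) : ℂ)) f

/-- The propagator `S_{m_β}(t) = exp(-it m_β(D))`, so that `S_{m_β}(±t) = prop β (±t)`. -/
def propg (β : ℝ) {d : ℕ} (t : ℝ) (f : Euc d → ℂ) : Euc d → ℂ :=
  mulOp (fun ξ => Complex.exp (-Complex.I * (t * mSymb β ‖ξ‖))) f

/-- The symbol `K(ξ) = tanh|ξ|/|ξ|`. -/
def Ksym {d : ℕ} (ξ : Euc d) : ℝ := Real.tanh ‖ξ‖ / ‖ξ‖

/-- The `j`-th Riesz symbol `ξ_j/|ξ|`. -/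
def rzSym {d : ℕ} (j : Fin d) (ξ : Euc d) : ℝ := ξ j / ‖ξ‖

/-- The dyadic norm `‖u‖_{X_λ} = (‖P_λ u‖²_{L^∞_T L^2_x}
+ ⟨λ⟩^{-3/q} ‖P_λ u‖²_{L^q_T L^r_x})^{1/2}` with `r = 2qd/(qd-4)`. -/
def XlamNorm {d : ℕ} (χ : ℝ → ℝ) (T q lam : ℝ) (u : ℝ → Euc d → ℂ) : ℝ≥0∞ :=
  (essSup (fun t => eLpNorm (proj χ lam (u t)) 2 volume)
      (volume.restrict (Set.Ioc (0 : ℝ) T)) ^ 2 +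
    ENNReal.ofReal (jap lam ^ (-3 / q)) *
      ((∫⁻ t in Set.Ioc (0 : ℝ) T,
          eLpNorm (proj χ lam (u t))
              (ENNReal.ofReal (2 * q * d / (q * d - 4))) volume ^ q) ^ (1 / q)) ^ 2) ^
    ((1 : ℝ) / 2)

/-- The norm `‖u‖_{X^s_T} = (Σ_{λ ∈ 2^ℤ} ⟨λ⟩^{2s} ‖u‖²_{X_λ})^{1/2}`. -/
def XsNorm {d : ℕ} (χ : ℝ → ℝ) (T q s : ℝ) (u : ℝ → Euc d → ℂ) : ℝ≥0∞ :=
  (∑' n : ℤ, ENNReal.ofReal (jap ((2 : ℝ) ^ n) ^ (2 * s)) *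
      XlamNorm χ T q ((2 : ℝ) ^ n) u ^ 2) ^ ((1 : ℝ) / 2)

theorem continuous_fourier_of_integrable {d : ℕ} {f : Euc d → ℂ} (hf : Integrable f) :
    Continuous (𝓕 f) :=
  VectorFourier.fourierIntegral_continuous Real.continuous_fourierChar
    (innerSL ℝ).continuous₂ hf

/-- **Plancherel** for integrable functions, as an inequality of possibly infinite norms. -/
theorem eLpNorm_fourier_le {d : ℕ} {f : Euc d → ℂ} (hf : Integrable f) :
    eLpNorm (𝓕 f) 2 volume ≤ eLpNorm f 2 volume := by
  by_cases htop : eLpNorm f 2 volume = ⊤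
  · simp [htop]
  have hf2 : MemLp f 2 volume := ⟨hf.1, lt_top_iff_ne_top.2 htop⟩
  set F : Lp ℂ 2 (volume : Measure (Euc d)) := hf2.toLp f with hF
  have hae : ∀ᵐ x, 𝓕 f x = (𝓕 F : Lp ℂ 2 (volume : Measure (Euc d))) x := by
    refine ae_eq_of_integral_contDiff_smul_eq
      (continuous_fourier_of_integrable hf).locallyIntegrable
      ((Lp.memLp _).locallyIntegrable (by norm_num)) fun g hg hgs => ?_
    have hgs' : HasCompactSupport fun x => (g x : ℂ) := hgs.comp_left Complex.ofReal_zero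
    set G : SchwartzMap (Euc d) ℂ :=
      hgs'.toSchwartzMap (Complex.ofRealCLM.contDiff.comp hg)
    have hGg : ∀ x, G x = (g x : ℂ) := fun x => rfl
    have h1 : ∫ x, G x • (𝓕 F : Lp ℂ 2 (volume : Measure (Euc d))) x =
        ∫ x, (𝓕 G) x • F x := by
      have h := congrArg (fun S => S G) (Lp.fourier_toTemperedDistribution_eq F)
      simp only [TemperedDistribution.fourier_apply, Lp.toTemperedDistribution_apply] at h
      exact h.symm
    have h2 : ∫ x, (𝓕 G) x • F x = ∫ x, (𝓕 G) x • f x := by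
      refine integral_congr_ae ?_
      filter_upwards [hf2.coeFn_toLp] with x hx
      rw [hF, hx]
    have h3 : ∫ x, G x • 𝓕 f x = ∫ x, (𝓕 (G : Euc d → ℂ)) x • f x := by
      have h := VectorFourier.integral_fourierIntegral_smul_eq_flip (e := 𝐞)
        (μ := (volume : Measure (Euc d))) (ν := (volume : Measure (Euc d)))
        (L := innerₗ (Euc d)) (f := (G : Euc d → ℂ)) (g := f) Real.continuous_fourierChar
        continuous_inner G.integrable hf
      rw [flip_innerₗ] at h
      exact h.symm
    calc ∫ x, g x • 𝓕 f x = ∫ x, G x • 𝓕 f x := by simp [hGg]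
      _ = ∫ x, G x • (𝓕 F : Lp ℂ 2 (volume : Measure (Euc d))) x := by
        rw [h1, h2, h3, SchwartzMap.fourier_coe]
      _ = _ := by simp [hGg]
  rw [eLpNorm_congr_ae hae, ← Lp.enorm_def, ← eLpNorm_congr_ae hf2.coeFn_toLp, ← Lp.enorm_def]
  rw [← ofReal_norm, ← ofReal_norm, Lp.norm_fourier_eq]

/-- **Plancherel** for the inverse Fourier transform. -/
theorem eLpNorm_fourierInv_le {d : ℕ} {f : Euc d → ℂ} (hf : Integrable f) :
    eLpNorm (𝓕⁻ f) 2 volume ≤ eLpNorm f 2 volume := by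
  rw [Real.fourierInv_eq_fourier_comp_neg]
  refine (eLpNorm_fourier_le hf.comp_neg).trans (le_of_eq ?_)
  exact eLpNorm_comp_measurePreserving hf.1 (Measure.measurePreserving_neg _)

theorem continuous_fourierInv_of_integrable {d : ℕ} {f : Euc d → ℂ} (hf : Integrable f) :
    Continuous (𝓕⁻ f) := by
  rw [Real.fourierInv_eq_fourier_comp_neg]
  exact continuous_fourier_of_integrable hf.comp_neg

theorem norm_fourier_le_integral {d : ℕ} (f : Euc d → ℂ) (ξ : Euc d) :
    ‖𝓕 f ξ‖ ≤ ∫ x, ‖f x‖ :=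
  VectorFourier.norm_fourierIntegral_le_integral_norm _ _ _ _ _

/-- The Fourier integral of a non-integrable function takes the junk value `0`. -/
theorem fourier_of_not_integrable {d : ℕ} {f : Euc d → ℂ} (hf : ¬ Integrable f) : 𝓕 f = 0 := by
  ext ξ
  rw [Real.fourier_eq]
  exact integral_undef (by rwa [Real.fourierIntegral_convergent_iff])

theorem mulOp_of_not_integrable {d : ℕ} (m : Euc d → ℂ) {f : Euc d → ℂ} (hf : ¬ Integrable f) :
    mulOp m f = 0 := by
  ext x
  simp [mulOp, fourier_of_not_integrable hf, Real.fourierInv_eq]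

/-- A symbol that is bounded and vanishes outside a ball, times the Fourier transform of an
integrable function, is integrable. -/
theorem integrable_mul_fourier {d : ℕ} {m : Euc d → ℂ} (hm : Measurable m) {A R : ℝ}
    (hA : ∀ ξ, ‖m ξ‖ ≤ A) (hR : ∀ ξ, R < ‖ξ‖ → m ξ = 0) {f : Euc d → ℂ} (hf : Integrable f) :
    Integrable fun ξ => m ξ * 𝓕 f ξ := by
  have hA0 : 0 ≤ A := (norm_nonneg _).trans (hA 0)
  have hbd : ∀ ξ, ‖m ξ * 𝓕 f ξ‖ ≤ (Metric.closedBall (0 : Euc d) R).indicator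
      (fun _ => A * ∫ x, ‖f x‖) ξ := by
    intro ξ
    by_cases h : ξ ∈ Metric.closedBall (0 : Euc d) R
    · rw [Set.indicator_of_mem h, norm_mul]
      exact mul_le_mul (hA ξ) (norm_fourier_le_integral f ξ) (norm_nonneg _) hA0
    · rw [Set.indicator_of_notMem h, hR ξ (by simpa using h)]
      simp
  refine Integrable.mono' ?_
    (hm.aestronglyMeasurable.mul (continuous_fourier_of_integrable hf).aestronglyMeasurable)
    (Filter.Eventually.of_forall hbd)
  rw [integrable_indicator_iff measurableSet_closedBall]
  exact integrableOn_const (isCompact_closedBall (0 : Euc d) R).measure_lt_top.ne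

/-- `L²` bound for a Fourier multiplier with bounded, boundedly supported symbol. -/
theorem continuous_mulOp {d : ℕ} {m : Euc d → ℂ} (hm : Measurable m) {A R : ℝ}
    (hA : ∀ ξ, ‖m ξ‖ ≤ A) (hR : ∀ ξ, R < ‖ξ‖ → m ξ = 0) (f : Euc d → ℂ) :
    Continuous (mulOp m f) := by
  by_cases hf : Integrable f
  · exact continuous_fourierInv_of_integrable (integrable_mul_fourier hm hA hR hf)
  · rw [mulOp_of_not_integrable m hf]
    exact continuous_zero

theorem eLpNorm_mulOp_le {d : ℕ} {m : Euc d → ℂ} (hm : Measurable m) {A R : ℝ}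
    (hA : ∀ ξ, ‖m ξ‖ ≤ A) (hR : ∀ ξ, R < ‖ξ‖ → m ξ = 0) (f : Euc d → ℂ) :
    eLpNorm (mulOp m f) 2 volume ≤ ENNReal.ofReal A * eLpNorm f 2 volume := by
  by_cases hf : Integrable f
  · refine (eLpNorm_fourierInv_le (integrable_mul_fourier hm hA hR hf)).trans ?_
    refine (eLpNorm_le_mul_eLpNorm_of_ae_le_mul (g := 𝓕 f) (c := A)
      (Filter.Eventually.of_forall fun ξ => ?_) 2).trans ?_
    · rw [norm_mul]
      exact mul_le_mul_of_nonneg_right (hA ξ) (norm_nonneg _)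
    · gcongr
      exact eLpNorm_fourier_le hf
  · rw [mulOp_of_not_integrable m hf, eLpNorm_zero]
    exact zero_le

/-- A Fourier multiplier with integrable symbol acts by convolution with its kernel. -/
theorem fourierInv_mul_fourier_eq_integral {d : ℕ} {M g : Euc d → ℂ} (hM : Integrable M)
    (hg : Integrable g) (x : Euc d) :
    𝓕⁻ (fun ξ => M ξ * 𝓕 g ξ) x = ∫ y, g y * 𝓕 M (y - x) := by
  have hint : Integrable fun ξ => 𝐞 (inner ℝ ξ x) • M ξ := by
    have := (Real.fourierIntegral_convergent_iff (f := M) (-x)).2 hM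
    simpa using this
  have h := VectorFourier.integral_fourierIntegral_smul_eq_flip (e := 𝐞)
    (μ := (volume : Measure (Euc d))) (ν := (volume : Measure (Euc d)))
    (L := innerₗ (Euc d)) (f := g) (g := fun ξ => 𝐞 (inner ℝ ξ x) • M ξ)
    Real.continuous_fourierChar continuous_inner hg hint
  rw [flip_innerₗ] at h
  have h1 : ∀ y, VectorFourier.fourierIntegral 𝐞 volume (innerₗ (Euc d))
      (fun ξ => 𝐞 (inner ℝ ξ x) • M ξ) y = 𝓕 M (y - x) := by
    intro y
    rw [Real.fourier_eq]
    refine integral_congr_ae (Filter.Eventually.of_forall fun ξ => ?_)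
    simp only [innerₗ_apply_apply, smul_smul, ← AddChar.map_add_eq_mul, inner_sub_right]
    congr 2
    ring
  simp only [h1, smul_eq_mul] at h
  rw [← h, Real.fourierInv_eq]
  refine integral_congr_ae (Filter.Eventually.of_forall fun ξ => ?_)
  change _ = 𝓕 g ξ * _
  simp only [Circle.smul_def, smul_eq_mul]
  ring

theorem eLpNorm_two_le_of_bounded_on_ball {d : ℕ} {F : Type*} [NormedAddCommGroup F]
    {h : Euc d → F} {A R : ℝ} (hR : 0 ≤ R) (hA0 : 0 ≤ A)
    (hA : ∀ ξ, ‖h ξ‖ ≤ A) (hsupp : ∀ ξ, R < ‖ξ‖ → h ξ = 0) :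
    eLpNorm h 2 volume ≤ ENNReal.ofReal (A * R ^ ((d : ℝ) / 2)) *
      volume (Metric.ball (0 : Euc d) 1) ^ ((1 : ℝ) / 2) := by
  have hle : eLpNorm h 2 volume ≤
      eLpNorm ((Metric.closedBall (0 : Euc d) R).indicator fun _ => A) 2 volume := by
    refine eLpNorm_mono fun ξ => ?_
    by_cases hξ : ξ ∈ Metric.closedBall (0 : Euc d) R
    · rw [Set.indicator_of_mem hξ, Real.norm_of_nonneg hA0]
      exact hA ξ
    · rw [hsupp ξ (by simpa using hξ)]
      simp
  refine hle.trans (le_of_eq ?_)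
  rw [eLpNorm_indicator_const measurableSet_closedBall (by norm_num) (by norm_num),
    Measure.addHaar_closedBall _ _ hR, ENNReal.mul_rpow_of_nonneg _ _ (by norm_num),
    ← mul_assoc, finrank_euclideanSpace, Fintype.card_fin,
    ENNReal.ofReal_mul hA0, Real.enorm_of_nonneg hA0]
  simp only [ENNReal.toReal_ofNat]
  rw [ENNReal.ofReal_rpow_of_nonneg (by positivity) (by norm_num), ← Real.rpow_natCast,
    ← Real.rpow_mul hR]
  congr 4
  ring

theorem norm_coord_mul_fourier_le {d : ℕ} {M : Euc d → ℂ} (hM : ContDiff ℝ 1 M)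
    (hMs : HasCompactSupport M) (j : Fin d) (x : Euc d) :
    |x j| * ‖𝓕 M x‖ ≤ ‖𝓕 (fun ξ => fderiv ℝ M ξ (EuclideanSpace.single j 1)) x‖ := by
  have hint : Integrable M := hM.continuous.integrable_of_hasCompactSupport hMs
  have hint' : Integrable (fderiv ℝ M) :=
    (hM.continuous_fderiv one_ne_zero).integrable_of_hasCompactSupport (hMs.fderiv ℝ)
  rw [← Real.fourier_continuousLinearMap_apply hint',
    Real.fourier_fderiv hint (hM.differentiable one_ne_zero) hint']
  have hx : innerSL ℝ x (EuclideanSpace.single j (1 : ℝ)) = x j := by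
    simp [EuclideanSpace.inner_single_right]
  simp only [VectorFourier.fourierSMulRight_apply, norm_smul, neg_apply, hx,
    norm_neg, norm_mul]
  simp only [Complex.norm_ofNat, Complex.norm_real, Complex.norm_I, Real.norm_eq_abs, mul_one,
    abs_of_pos Real.pi_pos]
  have h1 : 1 ≤ 2 * Real.pi := by linarith [Real.pi_gt_three]
  have h0 : 0 ≤ |x j| * ‖𝓕 M x‖ := by positivity
  nlinarith

/-- Weighted `L²` bound for the kernel of a `C¹` symbol adapted to frequency `lam`. -/
theorem exists_weighted_kernel_bound (d : ℕ) :
    ∃ C : ℝ, 0 ≤ C ∧ ∀ lam : ℝ, 0 < lam → ∀ A : ℝ, 0 ≤ A → ∀ M : Euc d → ℂ,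
      ContDiff ℝ 1 M → (∀ ξ, 4 * lam < ‖ξ‖ → M ξ = 0) → (∀ ξ, ‖M ξ‖ ≤ A) →
      (∀ ξ, ‖fderiv ℝ M ξ‖ ≤ A / lam) →
      eLpNorm (fun x => ((1 + lam * ‖x‖ : ℝ) : ℂ) * 𝓕 M x) 2 volume ≤
        ENNReal.ofReal (C * A * lam ^ ((d : ℝ) / 2)) := by
  set V : ℝ≥0∞ := volume (Metric.ball (0 : Euc d) 1) ^ ((1 : ℝ) / 2) with hV
  have hVtop : V ≠ ⊤ := ENNReal.rpow_ne_top_of_nonneg (by norm_num)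
    Metric.isBounded_ball.measure_lt_top.ne
  refine ⟨(1 + d) * 4 ^ ((d : ℝ) / 2) * V.toReal, by positivity, ?_⟩
  intro lam hlam A hA M hM hsupp hMA hM'
  have hcs : HasCompactSupport M :=
    HasCompactSupport.intro (isCompact_closedBall (0 : Euc d) (4 * lam)) fun ξ hξ =>
      hsupp ξ (by simpa using hξ)
  have hint : Integrable M := hM.continuous.integrable_of_hasCompactSupport hcs
  set D : Fin d → Euc d → ℂ := fun j ξ => fderiv ℝ M ξ (EuclideanSpace.single j 1) with hD
  have hDint : ∀ j, Integrable (D j) := fun j =>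
    ((hM.continuous_fderiv one_ne_zero).clm_apply
      continuous_const).integrable_of_hasCompactSupport (hcs.fderiv_apply ℝ _)
  have hDA : ∀ j ξ, ‖D j ξ‖ ≤ A / lam := fun j ξ => by
    refine ((fderiv ℝ M ξ).le_opNorm _).trans ?_
    simpa using hM' ξ
  have hDsupp : ∀ j ξ, 4 * lam < ‖ξ‖ → D j ξ = 0 := fun j ξ hξ => by
    have hev : M =ᶠ[nhds ξ] fun _ => 0 := by
      filter_upwards [(isOpen_lt continuous_const continuous_norm).mem_nhds hξ] with η hη
      exact hsupp η hη
    simp [hD, hev.fderiv_eq]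
  have hpt : ∀ x, ‖((1 + lam * ‖x‖ : ℝ) : ℂ) * 𝓕 M x‖ ≤
      ‖‖𝓕 M x‖ + ∑ j, lam * ‖𝓕 (D j) x‖‖ := by
    intro x
    have h0 : 0 ≤ ‖𝓕 M x‖ + ∑ j, lam * ‖𝓕 (D j) x‖ := by positivity
    rw [norm_mul, Complex.norm_real, Real.norm_of_nonneg (by positivity),
      Real.norm_of_nonneg h0, add_mul, one_mul]
    gcongr
    have hx : ‖x‖ ≤ ∑ j, |x j| := by
      have := norm_sum_le Finset.univ
        (fun j => (EuclideanSpace.basisFun (Fin d) ℝ).repr x j •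
          EuclideanSpace.basisFun (Fin d) ℝ j)
      rw [OrthonormalBasis.sum_repr] at this
      simpa [norm_smul] using this
    calc lam * ‖x‖ * ‖𝓕 M x‖ ≤ lam * (∑ j, |x j|) * ‖𝓕 M x‖ := by gcongr
      _ = ∑ j, lam * (|x j| * ‖𝓕 M x‖) := by
        rw [Finset.mul_sum, Finset.sum_mul]
        exact Finset.sum_congr rfl fun j _ => by ring
      _ ≤ _ := Finset.sum_le_sum fun j _ =>
        mul_le_mul_of_nonneg_left (norm_coord_mul_fourier_le hM hcs j x) hlam.le
  have hFM : eLpNorm (fun x => ‖𝓕 M x‖) 2 volume ≤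
      ENNReal.ofReal (A * (4 * lam) ^ ((d : ℝ) / 2)) * V := by
    rw [eLpNorm_norm]
    exact (eLpNorm_fourier_le hint).trans
      (eLpNorm_two_le_of_bounded_on_ball (by positivity) hA hMA hsupp)
  have hFD : ∀ j, eLpNorm (fun x => lam * ‖𝓕 (D j) x‖) 2 volume ≤
      ENNReal.ofReal (A * (4 * lam) ^ ((d : ℝ) / 2)) * V := by
    intro j
    have h1 := (eLpNorm_fourier_le (hDint j)).trans
      (eLpNorm_two_le_of_bounded_on_ball (by positivity : (0 : ℝ) ≤ 4 * lam)
        (by positivity : 0 ≤ A / lam) (hDA j) (hDsupp j))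
    have h2 : eLpNorm (fun x => lam * ‖𝓕 (D j) x‖) 2 volume =
        ENNReal.ofReal lam * eLpNorm (𝓕 (D j)) 2 volume := by
      have := eLpNorm_const_smul lam (fun x => ‖𝓕 (D j) x‖) 2 (volume : Measure (Euc d))
      rw [eLpNorm_norm, Real.enorm_of_nonneg hlam.le] at this
      exact this
    rw [h2]
    refine (mul_le_mul_right h1 _).trans (le_of_eq ?_)
    rw [← mul_assoc, ← ENNReal.ofReal_mul hlam.le]
    congr 2
    field_simp
  have hmeasM : AEStronglyMeasurable (fun x => ‖𝓕 M x‖) volume :=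
    (continuous_fourier_of_integrable hint).norm.aestronglyMeasurable
  have hmeasD : ∀ j, AEStronglyMeasurable (fun x => lam * ‖𝓕 (D j) x‖) volume := fun j =>
    ((continuous_fourier_of_integrable (hDint j)).norm.const_mul lam).aestronglyMeasurable
  calc eLpNorm (fun x => ((1 + lam * ‖x‖ : ℝ) : ℂ) * 𝓕 M x) 2 volume
      ≤ eLpNorm (fun x => ‖𝓕 M x‖ + ∑ j, lam * ‖𝓕 (D j) x‖) 2 volume := eLpNorm_mono hpt
    _ ≤ eLpNorm (fun x => ‖𝓕 M x‖) 2 volume +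
        eLpNorm (fun x => ∑ j, lam * ‖𝓕 (D j) x‖) 2 volume :=
      eLpNorm_add_le hmeasM (Finset.aestronglyMeasurable_fun_sum _ fun j _ => hmeasD j)
        (by norm_num)
    _ ≤ eLpNorm (fun x => ‖𝓕 M x‖) 2 volume +
        ∑ j, eLpNorm (fun x => lam * ‖𝓕 (D j) x‖) 2 volume := by
      gcongr
      have := eLpNorm_sum_le (μ := (volume : Measure (Euc d))) (p := 2) (s := Finset.univ)
        (f := fun j x => lam * ‖𝓕 (D j) x‖) (fun j _ => hmeasD j) (by norm_num)
      rwa [show (fun x => ∑ j, lam * ‖𝓕 (D j) x‖) = ∑ j, fun x => lam * ‖𝓕 (D j) x‖ from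
        funext fun x => by simp]
    _ ≤ ENNReal.ofReal (A * (4 * lam) ^ ((d : ℝ) / 2)) * V +
        ∑ _j : Fin d, ENNReal.ofReal (A * (4 * lam) ^ ((d : ℝ) / 2)) * V := by
      gcongr with j
      exact hFD j
    _ = _ := by
      rw [Finset.sum_const, Finset.card_univ, Fintype.card_fin, nsmul_eq_mul, ← one_add_mul,
        ← ENNReal.ofReal_toReal hVtop]
      rw [← ENNReal.ofReal_mul (by positivity), ← ENNReal.ofReal_natCast, ← ENNReal.ofReal_one,
        ← ENNReal.ofReal_add (by positivity) (by positivity),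
        ← ENNReal.ofReal_mul (by positivity), Real.mul_rpow (by norm_num) hlam.le]
      rw [ENNReal.toReal_ofReal (by positivity)]
      congr 1
      ring

/-- The `L^p` norm of `(1 + lam |x|)⁻¹` for `p > d`. -/
theorem exists_eLpNorm_weight_bound (d : ℕ) {p : ℝ} (hp0 : 0 < p) (hp : (d : ℝ) < p) :
    ∃ C : ℝ, 0 ≤ C ∧ ∀ lam : ℝ, 0 < lam →
      eLpNorm (fun x : Euc d => (1 + lam * ‖x‖)⁻¹) (ENNReal.ofReal p) volume ≤
        ENNReal.ofReal (C * lam ^ (-(d : ℝ) / p)) := by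
  set I : ℝ≥0∞ := ∫⁻ x : Euc d, ENNReal.ofReal ((1 + ‖x‖) ^ (-p)) with hI
  have hItop : I ≠ ⊤ := (finite_integral_one_add_norm (by simpa using hp)).ne
  refine ⟨(I ^ (1 / p)).toReal, by positivity, fun lam hlam => le_of_eq ?_⟩
  have hscale : ∫⁻ x : Euc d, ENNReal.ofReal ((1 + lam * ‖x‖) ^ (-p)) =
      ENNReal.ofReal (lam ^ (-(d : ℝ))) * I := by
    have hf : Measurable fun x : Euc d => ENNReal.ofReal ((1 + ‖x‖) ^ (-p)) := by fun_prop
    have h := lintegral_map (μ := (volume : Measure (Euc d))) hf (measurable_const_smul lam)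
    rw [Measure.map_addHaar_smul _ hlam.ne', lintegral_smul_measure] at h
    simp only [norm_smul, Real.norm_of_nonneg hlam.le, finrank_euclideanSpace,
      Fintype.card_fin, smul_eq_mul] at h
    rw [← h, hI]
    congr 2
    rw [abs_of_pos (by positivity), Real.rpow_neg hlam.le, Real.rpow_natCast]
  rw [eLpNorm_eq_lintegral_rpow_enorm_toReal (by simpa using hp0) (by simp),
    ENNReal.toReal_ofReal hp0.le]
  have hpt : ∀ x : Euc d, ‖(1 + lam * ‖x‖)⁻¹‖ₑ ^ p = ENNReal.ofReal ((1 + lam * ‖x‖) ^ (-p)) := by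
    intro x
    rw [Real.enorm_of_nonneg (by positivity), ENNReal.ofReal_rpow_of_nonneg (by positivity) hp0.le,
      Real.inv_rpow (by positivity), Real.rpow_neg (by positivity)]
  simp only [hpt]
  rw [hscale, ENNReal.mul_rpow_of_nonneg _ _ (by positivity),
    ENNReal.ofReal_rpow_of_nonneg (by positivity) (by positivity), ← Real.rpow_mul hlam.le,
    ENNReal.ofReal_mul (by positivity), ENNReal.ofReal_toReal
      (ENNReal.rpow_ne_top_of_nonneg (by positivity) hItop), mul_comm]
  congr 3
  ring

theorem holderTriple_two {q d : ℝ} (hq : 2 < q) (hd : 2 ≤ d) :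
    ENNReal.HolderTriple (ENNReal.ofReal (q * d / 2))
      (ENNReal.ofReal (2 * q * d / (q * d - 4))) 2 := by
  have hqd : 4 < q * d := by nlinarith
  have hp0 : 0 < q * d / 2 := by linarith
  have hr0 : 0 < 2 * q * d / (q * d - 4) := div_pos (by linarith) (by linarith)
  constructor
  rw [← ENNReal.ofReal_inv_of_pos hp0, ← ENNReal.ofReal_inv_of_pos hr0,
    ← ENNReal.ofReal_add (by positivity) (by positivity),
    show (2 : ℝ≥0∞) = ENNReal.ofReal 2 by simp, ← ENNReal.ofReal_inv_of_pos (by norm_num)]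
  congr 1
  have : q * d - 4 ≠ 0 := by linarith
  field_simp
  ring

/-- Weighted Hölder inequality for a translated kernel. -/
theorem lintegral_enorm_translate_mul_le {d : ℕ} {p r : ℝ≥0∞} (h : ENNReal.HolderTriple p r 2)
    {a : Euc d → ℂ} {b : Euc d → ℝ} {g : Euc d → ℂ} (ha : Continuous a) (hb : Continuous b)
    (hg : AEStronglyMeasurable g volume) (x : Euc d) :
    ∫⁻ y, ‖a (y - x) * (b (y - x) * g y)‖ₑ ≤
      eLpNorm a 2 volume * (eLpNorm b p volume * eLpNorm g r volume) := by
  have htr := measurePreserving_sub_right (volume : Measure (Euc d)) x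
  have hbm : AEStronglyMeasurable (fun y => b (y - x)) volume :=
    (hb.comp (continuous_sub_right x)).aestronglyMeasurable
  have ham : AEStronglyMeasurable (fun y => a (y - x)) volume :=
    (ha.comp (continuous_sub_right x)).aestronglyMeasurable
  have hna : eLpNorm (fun y => a (y - x)) 2 volume = eLpNorm a 2 volume :=
    eLpNorm_comp_measurePreserving ha.aestronglyMeasurable htr
  have hnb : eLpNorm (fun y => b (y - x)) p volume = eLpNorm b p volume :=
    eLpNorm_comp_measurePreserving hb.aestronglyMeasurable htr
  calc ∫⁻ y, ‖a (y - x) * (b (y - x) * g y)‖ₑ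
      = eLpNorm ((fun y => a (y - x)) • ((fun y => b (y - x)) • g)) 1 volume := by
        rw [eLpNorm_one_eq_lintegral_enorm]
        rfl
    _ ≤ eLpNorm (fun y => a (y - x)) 2 volume * eLpNorm ((fun y => b (y - x)) • g) 2 volume :=
        eLpNorm_smul_le_mul_eLpNorm (hbm.smul hg) ham
    _ ≤ eLpNorm a 2 volume * (eLpNorm b p volume * eLpNorm g r volume) := by
        rw [hna, ← hnb]
        gcongr
        exact eLpNorm_smul_le_mul_eLpNorm hg hbm

/-- **Bernstein's inequality** from `L^r` to `L^∞` for a `C¹` symbol adapted to frequency `lam`. -/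
theorem exists_bernstein_bound (d : ℕ) (hd : 2 ≤ d) (q : ℝ) (hq : 2 < q) :
    ∃ C : ℝ, 0 ≤ C ∧ ∀ lam : ℝ, 0 < lam → ∀ A : ℝ, 0 ≤ A → ∀ M : Euc d → ℂ,
      ContDiff ℝ 1 M → (∀ ξ, 4 * lam < ‖ξ‖ → M ξ = 0) → (∀ ξ, ‖M ξ‖ ≤ A) →
      (∀ ξ, ‖fderiv ℝ M ξ‖ ≤ A / lam) → ∀ g : Euc d → ℂ, Integrable g → ∀ x,
      ‖mulOp M g x‖ₑ ≤ ENNReal.ofReal (C * A * lam ^ ((d : ℝ) / 2 - 2 / q)) *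
        eLpNorm g (ENNReal.ofReal (2 * q * d / (q * d - 4))) volume := by
  have hd' : (2 : ℝ) ≤ d := by exact_mod_cast hd
  have hqd : 4 < q * d := by nlinarith
  have hp0 : 0 < q * d / 2 := by linarith
  obtain ⟨C₁, hC₁, hker⟩ := exists_weighted_kernel_bound d
  obtain ⟨C₂, hC₂, hwt⟩ := exists_eLpNorm_weight_bound d hp0 (by nlinarith)
  refine ⟨C₁ * C₂, by positivity, ?_⟩
  intro lam hlam A hA M hM hsupp hMA hM' g hg x
  have hMint : Integrable M := hM.continuous.integrable_of_hasCompactSupport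
    (HasCompactSupport.intro (isCompact_closedBall (0 : Euc d) (4 * lam)) fun ξ hξ =>
      hsupp ξ (by simpa using hξ))
  have hHolder := holderTriple_two hq hd'
  have hFM : Continuous (𝓕 M) := continuous_fourier_of_integrable hMint
  set a : Euc d → ℂ := fun y => ((1 + lam * ‖y‖ : ℝ) : ℂ) * 𝓕 M y with ha
  set b : Euc d → ℝ := fun y => (1 + lam * ‖y‖)⁻¹ with hb
  have hac : Continuous a := by fun_prop
  have hbc : Continuous b := by
    refine Continuous.inv₀ (by fun_prop) fun y => ?_
    positivity
  have hprod : ∀ y, g y * 𝓕 M (y - x) = a (y - x) * (b (y - x) * g y) := by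
    intro y
    have h1 : ((1 + lam * ‖y - x‖ : ℝ) : ℂ) ≠ 0 := by
      have : 0 < 1 + lam * ‖y - x‖ := by positivity
      exact_mod_cast this.ne'
    simp only [ha, hb, Complex.ofReal_inv]
    field_simp
  have hexp : lam ^ ((d : ℝ) / 2) * lam ^ (-(d : ℝ) / (q * d / 2)) =
      lam ^ ((d : ℝ) / 2 - 2 / q) := by
    rw [← Real.rpow_add hlam]
    congr 1
    field_simp
    ring
  calc ‖mulOp M g x‖ₑ = ‖∫ y, g y * 𝓕 M (y - x)‖ₑ := by
        rw [mulOp, fourierInv_mul_fourier_eq_integral hMint hg]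
    _ ≤ ∫⁻ y, ‖g y * 𝓕 M (y - x)‖ₑ := enorm_integral_le_lintegral_enorm _
    _ ≤ eLpNorm a 2 volume * (eLpNorm b (ENNReal.ofReal (q * d / 2)) volume *
          eLpNorm g (ENNReal.ofReal (2 * q * d / (q * d - 4))) volume) := by
        simp only [hprod]
        exact lintegral_enorm_translate_mul_le hHolder hac hbc hg.1 x
    _ ≤ ENNReal.ofReal (C₁ * A * lam ^ ((d : ℝ) / 2)) *
          (ENNReal.ofReal (C₂ * lam ^ (-(d : ℝ) / (q * d / 2))) *
            eLpNorm g (ENNReal.ofReal (2 * q * d / (q * d - 4))) volume) := by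
        gcongr
        · exact hker lam hlam A hA M hM hsupp hMA hM'
        · exact hwt lam hlam
    _ = _ := by
        rw [← mul_assoc, ← ENNReal.ofReal_mul (by positivity), ← hexp]
        congr 2
        ring

/-- A radial function that vanishes near the origin is as smooth as its profile. -/
theorem contDiff_comp_norm {d : ℕ} {n : WithTop ℕ∞} {φ : ℝ → ℝ} {ε : ℝ} (hε : 0 < ε)
    (h0 : ∀ s, 0 ≤ s → s < ε → φ s = 0) (hφ : ∀ s, 0 < s → ContDiffAt ℝ n φ s) :
    ContDiff ℝ n fun ξ : Euc d => φ ‖ξ‖ := by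
  rw [contDiff_iff_contDiffAt]
  intro ξ
  by_cases hξ : ξ = 0
  · refine contDiffAt_const (c := (0 : ℝ)) |>.congr_of_eventuallyEq ?_
    filter_upwards [Metric.ball_mem_nhds ξ hε] with η hη
    exact h0 _ (norm_nonneg _) (by simpa [hξ] using hη)
  · exact (hφ _ (norm_pos_iff.2 hξ)).comp ξ (contDiffAt_norm ℝ hξ)

theorem norm_fderiv_comp_norm_le {d : ℕ} {φ : ℝ → ℝ} {ε : ℝ} (hε : 0 < ε)
    (h0 : ∀ s, 0 ≤ s → s < ε → φ s = 0) (hφ : ∀ s, 0 < s → DifferentiableAt ℝ φ s) (ξ : Euc d) :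
    ‖fderiv ℝ (fun ξ : Euc d => φ ‖ξ‖) ξ‖ ≤ |deriv φ ‖ξ‖| := by
  by_cases hξ : ξ = 0
  · have : (fun ξ : Euc d => φ ‖ξ‖) =ᶠ[nhds ξ] fun _ => 0 := by
      filter_upwards [Metric.ball_mem_nhds ξ hε] with η hη
      exact h0 _ (norm_nonneg _) (by simpa [hξ] using hη)
    simp [this.fderiv_eq]
  · have h1 := (hφ _ (norm_pos_iff.2 hξ)).hasDerivAt
    have h2 : HasFDerivAt (fun η : Euc d => ‖η‖) (fderiv ℝ (fun η : Euc d => ‖η‖) ξ) ξ :=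
      ((contDiffAt_norm ℝ hξ (n := 1)).differentiableAt one_ne_zero).hasFDerivAt
    have h4 : fderiv ℝ (fun ξ : Euc d => φ ‖ξ‖) ξ =
        deriv φ ‖ξ‖ • fderiv ℝ (fun η : Euc d => ‖η‖) ξ := (h1.comp_hasFDerivAt ξ h2).fderiv
    rw [h4, norm_smul, Real.norm_eq_abs]
    have h3 : ‖fderiv ℝ (fun η : Euc d => ‖η‖) ξ‖ ≤ 1 := by
      simpa using norm_fderiv_le_of_lipschitz ℝ (lipschitzWith_one_norm (E := Euc d)) (x₀ := ξ)
    exact mul_le_of_le_one_right (abs_nonneg _) h3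

/-- A thickened Littlewood–Paley cutoff, equal to `1` on the support of `rho χ`. -/
def wideRho (χ : ℝ → ℝ) (s : ℝ) : ℝ := χ (s / 2) - χ (4 * s)

section Cutoff

variable {χ : ℝ → ℝ}

theorem IsCutoff.eq_zero_of_two_le (hχ : IsCutoff χ) {s : ℝ} (hs : 2 ≤ s) : χ s = 0 := by
  obtain ⟨hsm, -, -, -, hsupp⟩ := hχ
  have hgt : ∀ t, 2 < t → χ t = 0 := fun t ht => by
    by_contra h
    exact absurd (hsupp h).2 (not_le.2 ht)
  rcases hs.lt_or_eq with h | h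
  · exact hgt s h
  · have hcl : IsClosed {t | χ t = 0} := isClosed_eq hsm.continuous continuous_const
    have : Set.Ici (2 : ℝ) ⊆ {t | χ t = 0} := by
      rw [← closure_Ioi]
      exact hcl.closure_subset_iff.2 hgt
    exact this h.le

theorem IsCutoff.abs_sub_le_one (hχ : IsCutoff χ) (s t : ℝ) : |χ s - χ t| ≤ 1 := by
  have h1 := hχ.2.2.1 s
  have h2 := hχ.2.2.1 t
  rw [abs_le]
  constructor <;> linarith [h1.1, h1.2, h2.1, h2.2]

theorem rho_eq_zero_of_le (hχ : IsCutoff χ) {s : ℝ} (h0 : 0 ≤ s) (hs : s ≤ 1 / 2) :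
    rho χ s = 0 := by
  rw [rho, hχ.2.2.2.1 s ⟨by linarith, by linarith⟩,
    hχ.2.2.2.1 (2 * s) ⟨by linarith, by linarith⟩, sub_self]

theorem rho_eq_zero_of_ge (hχ : IsCutoff χ) {s : ℝ} (hs : 2 ≤ s) : rho χ s = 0 := by
  rw [rho, hχ.eq_zero_of_two_le hs, hχ.eq_zero_of_two_le (by linarith), sub_self]

theorem wideRho_eq_zero_of_abs_le (hχ : IsCutoff χ) {s : ℝ} (hs : |s| ≤ 1 / 4) :
    wideRho χ s = 0 := by
  have := abs_le.1 hs
  rw [wideRho, hχ.2.2.2.1 (s / 2) ⟨by linarith, by linarith⟩,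
    hχ.2.2.2.1 (4 * s) ⟨by linarith, by linarith⟩, sub_self]

theorem wideRho_eq_zero_of_ge (hχ : IsCutoff χ) {s : ℝ} (hs : 4 ≤ s) : wideRho χ s = 0 := by
  rw [wideRho, hχ.eq_zero_of_two_le (by linarith), hχ.eq_zero_of_two_le (by linarith), sub_self]

theorem wideRho_eq_one (hχ : IsCutoff χ) {s : ℝ} (h1 : 1 / 2 ≤ s) (h2 : s ≤ 2) :
    wideRho χ s = 1 := by
  rw [wideRho, hχ.2.2.2.1 (s / 2) ⟨by linarith, by linarith⟩,
    hχ.eq_zero_of_two_le (by linarith), sub_zero]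

theorem contDiff_rho (hχ : IsCutoff χ) : ContDiff ℝ (⊤ : ℕ∞) (rho χ) :=
  hχ.1.sub (hχ.1.comp (contDiff_const.mul contDiff_id))

theorem contDiff_wideRho (hχ : IsCutoff χ) : ContDiff ℝ (⊤ : ℕ∞) (wideRho χ) :=
  (hχ.1.comp (contDiff_id.div_const 2)).sub (hχ.1.comp (contDiff_const.mul contDiff_id))

theorem exists_deriv_wideRho_bound (hχ : IsCutoff χ) :
    ∃ L : ℝ, 0 ≤ L ∧ ∀ s, |deriv (wideRho χ) s| ≤ L := by
  have hcs : HasCompactSupport (wideRho χ) := by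
    have h1 : HasCompactSupport fun s : ℝ => χ (s / 2) := by
      simpa [div_eq_inv_mul] using! hχ.2.1.comp_smul (c := (2 : ℝ)⁻¹) (by norm_num)
    have h2 : HasCompactSupport fun s : ℝ => χ (4 * s) := by
      simpa using! hχ.2.1.comp_smul (c := (4 : ℝ)) (by norm_num)
    exact h1.sub h2
  obtain ⟨L, hL⟩ := ((contDiff_wideRho hχ).continuous_deriv
    (by exact_mod_cast le_top)).bounded_above_of_compact_support hcs.deriv
  exact ⟨L, (norm_nonneg _).trans (hL 0), hL⟩

theorem wideRho_div_eq_zero (hχ : IsCutoff χ) {lam : ℝ} (hlam : 0 < lam) {s : ℝ} (hs : 0 ≤ s)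
    (hs' : s < lam / 4) : wideRho χ (s / lam) = 0 :=
  wideRho_eq_zero_of_abs_le hχ (by
    rw [abs_of_nonneg (by positivity), div_le_iff₀ hlam]; linarith)

theorem hasDerivAt_wideRho_div (hχ : IsCutoff χ) (lam s : ℝ) :
    HasDerivAt (fun s => wideRho χ (s / lam)) (deriv (wideRho χ) (s / lam) / lam) s := by
  have h := (((contDiff_wideRho hχ).differentiable (by simp)) (s / lam)).hasDerivAt.comp s
    ((hasDerivAt_id s).div_const lam)
  rw [mul_one_div] at h
  exact h

theorem norm_fderiv_ofReal_comp_le {E : Type*} [NormedAddCommGroup E] [NormedSpace ℝ E]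
    {φ : E → ℝ} {x : E} (hφ : DifferentiableAt ℝ φ x) :
    ‖fderiv ℝ (fun y => (φ y : ℂ)) x‖ ≤ ‖fderiv ℝ φ x‖ := by
  have h : fderiv ℝ (fun y => (φ y : ℂ)) x = Complex.ofRealCLM.comp (fderiv ℝ φ x) :=
    (Complex.ofRealCLM.hasFDerivAt.comp x hφ.hasFDerivAt).fderiv
  rw [h]
  refine (ContinuousLinearMap.opNorm_comp_le _ _).trans ?_
  simp

/-- The thickened cutoff at scale `lam` is an admissible Bernstein symbol. -/
theorem wideRho_symbol_bounds (hχ : IsCutoff χ) {L : ℝ} (hL : ∀ s, |deriv (wideRho χ) s| ≤ L)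
    {lam : ℝ} (hlam : 0 < lam) (d : ℕ) :
    ContDiff ℝ 1 (fun ξ : Euc d => ((wideRho χ (‖ξ‖ / lam) : ℝ) : ℂ)) ∧
      ∀ ξ : Euc d, ‖fderiv ℝ (fun ξ : Euc d => ((wideRho χ (‖ξ‖ / lam) : ℝ) : ℂ)) ξ‖ ≤
        L / lam := by
  have hsm : ContDiff ℝ 1 fun s => wideRho χ (s / lam) :=
    ((contDiff_wideRho hχ).of_le (by exact_mod_cast le_top)).comp (contDiff_id.div_const lam)
  have hε : 0 < lam / 4 := by positivity
  have h0 : ∀ s, 0 ≤ s → s < lam / 4 → wideRho χ (s / lam) = 0 := fun s =>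
    wideRho_div_eq_zero hχ hlam
  have hreal := contDiff_comp_norm (d := d) hε h0 fun s _ => hsm.contDiffAt
  refine ⟨Complex.ofRealCLM.contDiff.comp hreal, fun ξ => ?_⟩
  refine (norm_fderiv_ofReal_comp_le (hreal.differentiable one_ne_zero ξ)).trans
    ((norm_fderiv_comp_norm_le hε h0
      (fun s _ => hsm.differentiable one_ne_zero s) ξ).trans ?_)
  rw [(hasDerivAt_wideRho_div hχ lam _).deriv, abs_div, abs_of_pos hlam]
  exact div_le_div_of_nonneg_right (hL _) hlam.le

end Cutoff

/-- The radial profile of `√K`. -/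
def sqrtKProfile (s : ℝ) : ℝ := √(Real.tanh s / s)

theorem tanh_pos_of_pos {s : ℝ} (hs : 0 < s) : 0 < Real.tanh s := by
  rw [Real.tanh_eq_sinh_div_cosh]
  exact div_pos (Real.sinh_pos_iff.2 hs) (Real.cosh_pos s)

theorem tanh_le_self {s : ℝ} (hs : 0 ≤ s) : Real.tanh s ≤ s := by
  rw [Real.tanh_eq_sinh_div_cosh, div_le_iff₀ (Real.cosh_pos s)]
  have hmono : MonotoneOn (fun x => x * Real.cosh x - Real.sinh x) (Set.Ici 0) := by
    refine monotoneOn_of_deriv_nonneg (convex_Ici 0) (by fun_prop) (by fun_prop) fun x hx => ?_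
    rw [interior_Ici] at hx
    have h : HasDerivAt (fun x => x * Real.cosh x - Real.sinh x)
        (1 * Real.cosh x + x * Real.sinh x - Real.cosh x) x :=
      ((hasDerivAt_id x).mul (Real.hasDerivAt_cosh x)).sub (Real.hasDerivAt_sinh x)
    rw [h.deriv]
    have := mul_pos hx (Real.sinh_pos_iff.2 hx)
    linarith
  have := hmono (Set.mem_Ici.2 le_rfl) (Set.mem_Ici.2 hs) hs
  simp at this
  linarith

theorem hasDerivAt_tanh (s : ℝ) : HasDerivAt Real.tanh (1 / Real.cosh s ^ 2) s := by
  have h := (Real.hasDerivAt_sinh s).div (Real.hasDerivAt_cosh s) (Real.cosh_pos s).ne'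
  have h2 : Real.tanh = Real.sinh / Real.cosh := funext Real.tanh_eq_sinh_div_cosh
  have h3 : (1 : ℝ) = Real.cosh s * Real.cosh s - Real.sinh s * Real.sinh s := by
    nlinarith [Real.cosh_sq s]
  rw [h2, h3]
  exact h

theorem contDiff_tanh {n : WithTop ℕ∞} : ContDiff ℝ n Real.tanh := by
  have h2 : Real.tanh = Real.sinh / Real.cosh := funext Real.tanh_eq_sinh_div_cosh
  rw [h2]
  exact Real.contDiff_sinh.div Real.contDiff_cosh fun x => (Real.cosh_pos x).ne'

theorem sqrtKProfile_pos {s : ℝ} (hs : 0 < s) : 0 < sqrtKProfile s :=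
  Real.sqrt_pos.2 (div_pos (tanh_pos_of_pos hs) hs)

theorem sq_sqrtKProfile {s : ℝ} (hs : 0 < s) : sqrtKProfile s ^ 2 = Real.tanh s / s :=
  Real.sq_sqrt (div_pos (tanh_pos_of_pos hs) hs).le

theorem contDiffAt_sqrtKProfile {n : WithTop ℕ∞} {s : ℝ} (hs : 0 < s) :
    ContDiffAt ℝ n sqrtKProfile s :=
  (contDiff_tanh.contDiffAt.div contDiffAt_id hs.ne').sqrt
    (div_pos (tanh_pos_of_pos hs) hs).ne'

theorem abs_deriv_sqrtKProfile_le {s : ℝ} (hs : 0 < s) :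
    |deriv sqrtKProfile s| ≤ sqrtKProfile s / (2 * s) := by
  have hF := sqrtKProfile_pos hs
  have hT := tanh_pos_of_pos hs
  have hd : HasDerivAt sqrtKProfile
      ((1 / Real.cosh s ^ 2 * s - Real.tanh s * 1) / s ^ 2 / (2 * sqrtKProfile s)) s :=
    ((hasDerivAt_tanh s).div (hasDerivAt_id s) hs.ne').sqrt (div_pos hT hs).ne'
  have hnum : |1 / Real.cosh s ^ 2 * s - Real.tanh s * 1| ≤ Real.tanh s := by
    have hc := Real.cosh_pos s
    have h1 : 1 / Real.cosh s ^ 2 * s ≤ 2 * Real.tanh s := by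
      rw [Real.tanh_eq_sinh_div_cosh]
      have hsi : s ≤ Real.sinh s := Real.self_le_sinh_iff.2 hs.le
      have hc1 := Real.one_le_cosh s
      rw [one_div, inv_mul_eq_div, ← mul_div_assoc, div_le_div_iff₀ (by positivity) hc]
      have : Real.sinh s * Real.cosh s ≤ Real.sinh s * Real.cosh s ^ 2 :=
        mul_le_mul_of_nonneg_left (by nlinarith) (hs.le.trans hsi)
      nlinarith [mul_le_mul_of_nonneg_right hsi hc.le]
    have h2 : 0 ≤ 1 / Real.cosh s ^ 2 * s := by positivity
    rw [abs_le]
    constructor <;> linarith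
  rw [hd.deriv, abs_div, abs_div, abs_of_pos (by positivity : 0 < s ^ 2),
    abs_of_pos (by positivity : 0 < 2 * sqrtKProfile s), div_le_div_iff₀ (by positivity)
    (by positivity)]
  have hsq := sq_sqrtKProfile hs
  calc |1 / Real.cosh s ^ 2 * s - Real.tanh s * 1| / s ^ 2 * (2 * s)
      ≤ Real.tanh s / s ^ 2 * (2 * s) := by gcongr
    _ = 2 * (Real.tanh s / s) := by field_simp
    _ = _ := by rw [← hsq]; ring

theorem sqrtKProfile_le_jap {lam s : ℝ} (hlam : 0 < lam) (hs : lam / 4 ≤ s) :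
    sqrtKProfile s ≤ 3 * jap lam ^ (-(1 : ℝ) / 2) := by
  have hs0 : 0 < s := by linarith
  have hj0 : 0 < jap lam := Real.sqrt_pos.2 (by positivity)
  have hj : jap lam ≤ 1 + lam := Real.sqrt_le_iff.2 ⟨by positivity, by nlinarith⟩
  have hJ : (jap lam ^ (-(1 : ℝ) / 2)) ^ 2 = (jap lam)⁻¹ := by
    rw [← Real.rpow_natCast, ← Real.rpow_mul hj0.le, ← Real.rpow_neg_one]; norm_num
  refine le_of_sq_le_sq ?_ (by positivity)
  rw [mul_pow, hJ, sq_sqrtKProfile hs0, ← div_eq_mul_inv, div_le_div_iff₀ hs0 hj0]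
  have h1 := tanh_le_self hs0.le
  have h2 := (Real.tanh_lt_one s).le
  nlinarith [mul_le_mul_of_nonneg_left hj (tanh_pos_of_pos hs0).le,
    mul_le_mul_of_nonneg_right h2 hlam.le]

/-- The symbol of the `j`-th component of `𝓡 √K`, localised to frequencies of size `lam`. -/
def rzSqrtKSymbol {d : ℕ} (χ : ℝ → ℝ) (lam : ℝ) (j : Fin d) (ξ : Euc d) : ℝ :=
  ξ j * (sqrtKProfile ‖ξ‖ / ‖ξ‖ * wideRho χ (‖ξ‖ / lam))

section RzSqrtK

variable {d : ℕ} {χ : ℝ → ℝ} {lam : ℝ}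

theorem rzSqrtKSymbol_eq (hχ : IsCutoff χ) (hlam : 0 < lam) (j : Fin d) {ξ : Euc d}
    (h1 : lam / 2 ≤ ‖ξ‖) (h2 : ‖ξ‖ ≤ 2 * lam) :
    rzSqrtKSymbol χ lam j ξ = rzSym j ξ * √(Ksym ξ) := by
  rw [rzSqrtKSymbol, wideRho_eq_one hχ, rzSym, Ksym, sqrtKProfile]
  · ring
  · rw [le_div_iff₀ hlam]; linarith
  · rw [div_le_iff₀ hlam]; linarith

theorem rzSqrtKSymbol_eq_zero (hχ : IsCutoff χ) (hlam : 0 < lam) (j : Fin d) {ξ : Euc d}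
    (h : 4 * lam < ‖ξ‖) : rzSqrtKSymbol χ lam j ξ = 0 := by
  rw [rzSqrtKSymbol, wideRho_eq_zero_of_ge hχ ((le_div_iff₀ hlam).2 h.le)]
  ring

theorem abs_rzSqrtKSymbol_le (hχ : IsCutoff χ) (hlam : 0 < lam) (j : Fin d) (ξ : Euc d) :
    |rzSqrtKSymbol χ lam j ξ| ≤ 3 * jap lam ^ (-(1 : ℝ) / 2) := by
  have hj0 : 0 < jap lam := Real.sqrt_pos.2 (by positivity)
  rcases lt_or_ge ‖ξ‖ (lam / 4) with h | h
  · rw [rzSqrtKSymbol, wideRho_div_eq_zero hχ hlam (norm_nonneg _) h]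
    simp only [mul_zero, abs_zero]
    positivity
  · have hξ : 0 < ‖ξ‖ := by linarith
    have hF := sqrtKProfile_pos hξ
    rw [rzSqrtKSymbol, abs_mul, abs_mul, abs_of_pos (div_pos hF hξ)]
    calc |ξ j| * (sqrtKProfile ‖ξ‖ / ‖ξ‖ * |wideRho χ (‖ξ‖ / lam)|)
        ≤ ‖ξ‖ * (sqrtKProfile ‖ξ‖ / ‖ξ‖ * 1) := by
          gcongr
          · exact PiLp.norm_apply_le ξ j
          · exact hχ.abs_sub_le_one _ _
      _ = sqrtKProfile ‖ξ‖ := by field_simp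
      _ ≤ _ := sqrtKProfile_le_jap hlam h

theorem contDiffAt_rzSqrtK_profile (hχ : IsCutoff χ) {s : ℝ} (hs : 0 < s) :
    ContDiffAt ℝ 1 (fun s => sqrtKProfile s / s * wideRho χ (s / lam)) s := by
  refine ((contDiffAt_sqrtKProfile hs).div contDiffAt_id hs.ne').mul ?_
  exact (((contDiff_wideRho hχ).of_le (by exact_mod_cast le_top)).comp
    (contDiff_id.div_const lam)).contDiffAt

theorem contDiff_rzSqrtKSymbol (hχ : IsCutoff χ) (hlam : 0 < lam) (j : Fin d) :
    ContDiff ℝ 1 (rzSqrtKSymbol χ lam j) := by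
  refine ContDiff.mul (by fun_prop) (contDiff_comp_norm (by positivity : 0 < lam / 4)
    (φ := fun s => sqrtKProfile s / s * wideRho χ (s / lam)) (fun s hs hs' => ?_)
    fun s hs => contDiffAt_rzSqrtK_profile hχ hs)
  simp only [wideRho_div_eq_zero hχ hlam hs hs', mul_zero]

theorem abs_deriv_rzSqrtK_profile_le (hχ : IsCutoff χ) {L : ℝ}
    (hL : ∀ s, |deriv (wideRho χ) s| ≤ L) (hlam : 0 < lam) {s : ℝ} (hs : lam / 4 ≤ s) :
    |deriv (fun s => sqrtKProfile s / s * wideRho χ (s / lam)) s| ≤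
      (6 + L) * sqrtKProfile s / (s * lam) := by
  have hs0 : 0 < s := by linarith
  have hF := sqrtKProfile_pos hs0
  have h1 : HasDerivAt sqrtKProfile (deriv sqrtKProfile s) s :=
    ((contDiffAt_sqrtKProfile (n := 1) hs0).differentiableAt one_ne_zero).hasDerivAt
  have h3 := (h1.div (hasDerivAt_id s) hs0.ne').mul (hasDerivAt_wideRho_div hχ lam s)
  have h4 := h3.deriv
  simp only [id] at h4
  have hb := abs_deriv_sqrtKProfile_le hs0
  have hnum : |deriv sqrtKProfile s * s - sqrtKProfile s * 1| ≤ 3 / 2 * sqrtKProfile s := by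
    refine (abs_sub _ _).trans ?_
    rw [abs_mul, abs_of_pos hs0, mul_one, abs_of_pos hF]
    have := mul_le_mul_of_nonneg_right hb hs0.le
    have h5 : sqrtKProfile s / (2 * s) * s = sqrtKProfile s / 2 := by field_simp
    linarith
  refine (le_of_eq (congrArg abs h4)).trans ((abs_add_le _ _).trans ?_)
  simp only [Pi.div_apply, id, abs_mul, abs_div]
  rw [abs_of_pos (by positivity : 0 < s ^ 2), abs_of_pos hF, abs_of_pos hs0, abs_of_pos hlam]
  calc _ ≤ 3 / 2 * sqrtKProfile s / s ^ 2 * 1 + sqrtKProfile s / s * (L / lam) := by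
        gcongr
        · exact hχ.abs_sub_le_one _ _
        · exact hL _
    _ ≤ 6 * sqrtKProfile s / (s * lam) + sqrtKProfile s / s * (L / lam) := by
        gcongr
        rw [mul_one, div_le_div_iff₀ (by positivity) (by positivity)]
        have : sqrtKProfile s * s * lam ≤ sqrtKProfile s * s * (4 * s) := by gcongr; linarith
        nlinarith
    _ = _ := by field_simp

theorem norm_fderiv_rzSqrtKSymbol_le (hχ : IsCutoff χ) {L : ℝ}
    (hL : ∀ s, |deriv (wideRho χ) s| ≤ L) (hlam : 0 < lam) (j : Fin d) (ξ : Euc d) :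
    ‖fderiv ℝ (rzSqrtKSymbol χ lam j) ξ‖ ≤
      3 * (10 + L) * jap lam ^ (-(1 : ℝ) / 2) / lam := by
  have hL0 : 0 ≤ L := (abs_nonneg _).trans (hL 0)
  have hj0 : 0 < jap lam := Real.sqrt_pos.2 (by positivity)
  set Ψ : ℝ → ℝ := fun s => sqrtKProfile s / s * wideRho χ (s / lam) with hΨ
  have hε : 0 < lam / 4 := by positivity
  have h0 : ∀ s, 0 ≤ s → s < lam / 4 → Ψ s = 0 := fun s hs hs' => by
    simp only [hΨ, wideRho_div_eq_zero hχ hlam hs hs', mul_zero]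
  rcases lt_or_ge ‖ξ‖ (lam / 4) with h | h
  · have : rzSqrtKSymbol χ lam j =ᶠ[nhds ξ] fun _ => 0 := by
      filter_upwards [(isOpen_lt continuous_norm continuous_const).mem_nhds h] with η hη
      have := h0 ‖η‖ (norm_nonneg _) hη
      rw [rzSqrtKSymbol]
      exact mul_eq_zero_of_right _ this
    rw [this.fderiv_eq]
    simp only [fderiv_fun_const, Pi.zero_apply, norm_zero]
    positivity
  · have hξ : 0 < ‖ξ‖ := by linarith
    have hF := sqrtKProfile_pos hξ
    have hΨd : DifferentiableAt ℝ (fun ξ : Euc d => Ψ ‖ξ‖) ξ :=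
      (contDiff_comp_norm hε h0 fun s hs =>
        contDiffAt_rzSqrtK_profile hχ hs).differentiable one_ne_zero ξ
    have hpr : HasFDerivAt (fun ξ : Euc d => ξ j) (EuclideanSpace.proj j : Euc d →L[ℝ] ℝ) ξ :=
      (EuclideanSpace.proj j : Euc d →L[ℝ] ℝ).hasFDerivAt
    have hfd : fderiv ℝ (rzSqrtKSymbol χ lam j) ξ =
        ξ j • fderiv ℝ (fun ξ : Euc d => Ψ ‖ξ‖) ξ +
          Ψ ‖ξ‖ • (EuclideanSpace.proj j : Euc d →L[ℝ] ℝ) := (hpr.mul hΨd.hasFDerivAt).fderiv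
    have hprn : ‖(EuclideanSpace.proj j : Euc d →L[ℝ] ℝ)‖ ≤ 1 :=
      ContinuousLinearMap.opNorm_le_bound _ zero_le_one fun x => by
        simpa using PiLp.norm_apply_le x j
    have hΨb : |Ψ ‖ξ‖| ≤ sqrtKProfile ‖ξ‖ / ‖ξ‖ := by
      rw [hΨ, abs_mul, abs_of_pos (div_pos hF hξ)]
      exact mul_le_of_le_one_right (div_pos hF hξ).le (hχ.abs_sub_le_one _ _)
    rw [hfd]
    refine (norm_add_le _ _).trans ?_
    rw [norm_smul, norm_smul]
    calc ‖ξ j‖ * ‖fderiv ℝ (fun ξ : Euc d => Ψ ‖ξ‖) ξ‖ +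
          ‖Ψ ‖ξ‖‖ * ‖(EuclideanSpace.proj j : Euc d →L[ℝ] ℝ)‖
        ≤ ‖ξ‖ * ((6 + L) * sqrtKProfile ‖ξ‖ / (‖ξ‖ * lam)) + sqrtKProfile ‖ξ‖ / ‖ξ‖ * 1 := by
          gcongr
          · exact PiLp.norm_apply_le ξ j
          · exact (norm_fderiv_comp_norm_le hε h0 (fun s hs =>
              (contDiffAt_rzSqrtK_profile hχ hs).differentiableAt one_ne_zero) ξ).trans
              (abs_deriv_rzSqrtK_profile_le hχ hL hlam h)
          · exact hΨb
      _ ≤ (6 + L) * sqrtKProfile ‖ξ‖ / lam + 4 * sqrtKProfile ‖ξ‖ / lam := by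
          gcongr ?_ + ?_
          · exact le_of_eq (by field_simp)
          · rw [mul_one, div_le_div_iff₀ hξ hlam]
            nlinarith [mul_le_mul_of_nonneg_left h hF.le]
      _ = (10 + L) * sqrtKProfile ‖ξ‖ / lam := by ring
      _ ≤ (10 + L) * (3 * jap lam ^ (-(1 : ℝ) / 2)) / lam := by
          gcongr
          exact sqrtKProfile_le_jap hlam h
      _ = _ := by ring

end RzSqrtK

theorem mulOp_eq_convolution {d : ℕ} (R : SchwartzMap (Euc d) ℂ) {f : Euc d → ℂ}
    (hf : Integrable f) :
    mulOp R f = convolution f (𝓕⁻ R : SchwartzMap (Euc d) ℂ) (ContinuousLinearMap.mul ℂ ℂ) := by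
  ext x
  rw [mulOp, fourierInv_mul_fourier_eq_integral R.integrable hf, convolution_def]
  refine integral_congr_ae (Filter.Eventually.of_forall fun y => ?_)
  simp only [ContinuousLinearMap.mul_apply', SchwartzMap.fourierInv_coe]
  rw [Real.fourierInv_eq_fourier_neg, neg_sub]

/-- A multiplier with Schwartz symbol maps every function to an integrable one, and acts on the
Fourier side as expected. -/
theorem integrable_mulOp_and_fourier_mulOp {d : ℕ} (R : SchwartzMap (Euc d) ℂ)
    (f : Euc d → ℂ) : Integrable (mulOp R f) ∧ ∀ ξ, 𝓕 (mulOp R f) ξ = R ξ * 𝓕 f ξ := by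
  by_cases hf : Integrable f
  · rw [mulOp_eq_convolution R hf]
    refine ⟨hf.integrable_convolution _ (SchwartzMap.integrable _), fun ξ => ?_⟩
    rw [Real.fourier_mul_convolution_eq hf (SchwartzMap.integrable _), ← SchwartzMap.fourier_coe,
      FourierTransform.fourier_fourierInv_eq, mul_comm]
  · rw [mulOp_of_not_integrable _ hf, fourier_of_not_integrable hf]
    refine ⟨integrable_zero _ _ _, fun ξ => ?_⟩
    simp [Real.fourier_eq]

section Proj

variable {d : ℕ} {χ : ℝ → ℝ} {lam : ℝ}

theorem rho_div_eq_zero_of_lt (hχ : IsCutoff χ) (hlam : 0 < lam) {ξ : Euc d}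
    (h : ‖ξ‖ < lam / 2) : rho χ (‖ξ‖ / lam) = 0 :=
  rho_eq_zero_of_le hχ (by positivity) (by rw [div_le_iff₀ hlam]; linarith)

theorem rho_div_eq_zero_of_gt (hχ : IsCutoff χ) (hlam : 0 < lam) {ξ : Euc d}
    (h : 2 * lam < ‖ξ‖) : rho χ (‖ξ‖ / lam) = 0 :=
  rho_eq_zero_of_ge hχ ((le_div_iff₀ hlam).2 h.le)

/-- The symbol of `P_λ` as a Schwartz function. -/
theorem exists_schwartzMap_eq_rho (hχ : IsCutoff χ) (hlam : 0 < lam) :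
    ∃ R : SchwartzMap (Euc d) ℂ, ∀ ξ, R ξ = (rho χ (‖ξ‖ / lam) : ℂ) := by
  have hsm : ContDiff ℝ (⊤ : ℕ∞) fun ξ : Euc d => ((rho χ (‖ξ‖ / lam) : ℝ) : ℂ) := by
    refine Complex.ofRealCLM.contDiff.comp (contDiff_comp_norm (by positivity : 0 < lam / 2)
      (φ := fun s => rho χ (s / lam)) (fun s hs hs' => ?_) fun s _ => ?_)
    · exact rho_eq_zero_of_le hχ (by positivity) (by rw [div_le_iff₀ hlam]; linarith)
    · exact ((contDiff_rho hχ).comp (contDiff_id.div_const lam)).contDiffAt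
  have hcs : HasCompactSupport fun ξ : Euc d => ((rho χ (‖ξ‖ / lam) : ℝ) : ℂ) :=
    HasCompactSupport.intro (isCompact_closedBall (0 : Euc d) (2 * lam)) fun ξ hξ => by
      rw [rho_div_eq_zero_of_gt hχ hlam (by simpa using hξ), Complex.ofReal_zero]
  exact ⟨hcs.toSchwartzMap hsm, fun ξ => rfl⟩

theorem integrable_proj_and_fourier_proj (hχ : IsCutoff χ) (hlam : 0 < lam) (f : Euc d → ℂ) :
    Integrable (proj χ lam f) ∧
      ∀ ξ, 𝓕 (proj χ lam f) ξ = (rho χ (‖ξ‖ / lam) : ℂ) * 𝓕 f ξ := by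
  obtain ⟨R, hR⟩ := exists_schwartzMap_eq_rho (d := d) hχ hlam
  have h : proj χ lam f = mulOp R f := by
    rw [proj]
    congr 1
    ext ξ
    exact (hR ξ).symm
  rw [h]
  refine ⟨(integrable_mulOp_and_fourier_mulOp R f).1, fun ξ => ?_⟩
  rw [(integrable_mulOp_and_fourier_mulOp R f).2, hR]

/-- The action of a multiplier on `P_λ f` depends only on its symbol in the annulus
`λ/2 ≤ |ξ| ≤ 2λ`. -/
theorem mulOp_proj_congr (hχ : IsCutoff χ) (hlam : 0 < lam) {m m' : Euc d → ℂ}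
    (h : ∀ ξ, lam / 2 ≤ ‖ξ‖ → ‖ξ‖ ≤ 2 * lam → m ξ = m' ξ) (f : Euc d → ℂ) :
    mulOp m (proj χ lam f) = mulOp m' (proj χ lam f) := by
  rw [mulOp, mulOp]
  congr 1
  ext ξ
  rw [(integrable_proj_and_fourier_proj hχ hlam f).2]
  rcases lt_or_ge ‖ξ‖ (lam / 2) with h1 | h1
  · simp [rho_div_eq_zero_of_lt hχ hlam h1]
  rcases lt_or_ge (2 * lam) ‖ξ‖ with h2 | h2
  · simp [rho_div_eq_zero_of_gt hχ hlam h2]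
  rw [h ξ h1 h2]

theorem mulOp_wideRho_proj (hχ : IsCutoff χ) (hlam : 0 < lam) (f : Euc d → ℂ) :
    mulOp (fun ξ => ((wideRho χ (‖ξ‖ / lam) : ℝ) : ℂ)) (proj χ lam f) = proj χ lam f := by
  rw [mulOp_proj_congr hχ hlam (m' := fun _ => 1)]
  · rw [mulOp]
    simp only [one_mul, (integrable_proj_and_fourier_proj hχ hlam f).2]
    rfl
  · intro ξ h1 h2
    rw [wideRho_eq_one hχ, Complex.ofReal_one]
    · rw [le_div_iff₀ hlam]; linarith
    · rw [div_le_iff₀ hlam]; linarith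

/-- Bernstein's inequality for `P_λ f`. -/
theorem exists_enorm_proj_le (d : ℕ) (hd : 2 ≤ d) (q : ℝ) (hq : 2 < q) (hχ : IsCutoff χ) :
    ∃ C : ℝ, 0 ≤ C ∧ ∀ lam : ℝ, 0 < lam → ∀ (f : Euc d → ℂ) (x : Euc d),
      ‖proj χ lam f x‖ₑ ≤ ENNReal.ofReal (C * lam ^ ((d : ℝ) / 2 - 2 / q)) *
        eLpNorm (proj χ lam f) (ENNReal.ofReal (2 * q * d / (q * d - 4))) volume := by
  obtain ⟨C, hC0, hC⟩ := exists_bernstein_bound d hd q hq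
  obtain ⟨L, hL0, hL⟩ := exists_deriv_wideRho_bound hχ
  refine ⟨C * (1 + L), by positivity, fun lam hlam f x => ?_⟩
  obtain ⟨hsm, hder⟩ := wideRho_symbol_bounds hχ hL hlam d
  have h := hC lam hlam (1 + L) (by positivity) _ hsm (fun ξ hξ => ?_) (fun ξ => ?_)
    (fun ξ => (hder ξ).trans (by gcongr; linarith)) _
    (integrable_proj_and_fourier_proj hχ hlam f).1 x
  · rwa [mulOp_wideRho_proj hχ hlam] at h
  · rw [wideRho_eq_zero_of_ge hχ ((le_div_iff₀ hlam).2 hξ.le), Complex.ofReal_zero]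
  · rw [Complex.norm_real]
    exact (hχ.abs_sub_le_one _ _).trans (by linarith)

theorem mulOp_rzSqrtK_proj_eq (hχ : IsCutoff χ) (hlam : 0 < lam) (j : Fin d) (f : Euc d → ℂ) :
    mulOp (fun ξ => ((rzSym j ξ * √(Ksym ξ) : ℝ) : ℂ)) (proj χ lam f) =
      mulOp (fun ξ => (rzSqrtKSymbol χ lam j ξ : ℂ)) (proj χ lam f) :=
  mulOp_proj_congr hχ hlam (fun ξ h1 h2 => by rw [rzSqrtKSymbol_eq hχ hlam j h1 h2]) f

/-- Bernstein's inequality for the components of `𝓡 √K P_λ f`. -/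
theorem exists_enorm_rzSqrtK_proj_le (d : ℕ) (hd : 2 ≤ d) (q : ℝ) (hq : 2 < q)
    (hχ : IsCutoff χ) :
    ∃ C : ℝ, 0 ≤ C ∧ ∀ lam : ℝ, 0 < lam → ∀ (j : Fin d) (f : Euc d → ℂ) (x : Euc d),
      ‖mulOp (fun ξ => ((rzSym j ξ * √(Ksym ξ) : ℝ) : ℂ)) (proj χ lam f) x‖ₑ ≤
        ENNReal.ofReal (C * jap lam ^ (-(1 : ℝ) / 2) * lam ^ ((d : ℝ) / 2 - 2 / q)) *
        eLpNorm (proj χ lam f) (ENNReal.ofReal (2 * q * d / (q * d - 4))) volume := by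
  obtain ⟨C, hC0, hC⟩ := exists_bernstein_bound d hd q hq
  obtain ⟨L, hL0, hL⟩ := exists_deriv_wideRho_bound hχ
  refine ⟨C * (3 * (10 + L)), by positivity, fun lam hlam j f x => ?_⟩
  have hj0 : 0 < jap lam := Real.sqrt_pos.2 (by positivity)
  have hsm := contDiff_rzSqrtKSymbol hχ hlam j
  have h := hC lam hlam (3 * (10 + L) * jap lam ^ (-(1 : ℝ) / 2)) (by positivity)
    (fun ξ => (rzSqrtKSymbol χ lam j ξ : ℂ)) (Complex.ofRealCLM.contDiff.comp hsm)
    (fun ξ hξ => ?_) (fun ξ => ?_)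
    (fun ξ => (norm_fderiv_ofReal_comp_le (hsm.differentiable one_ne_zero ξ)).trans
      (norm_fderiv_rzSqrtKSymbol_le hχ hL hlam j ξ)) _
    (integrable_proj_and_fourier_proj hχ hlam f).1 x
  · rw [mulOp_rzSqrtK_proj_eq hχ hlam]
    rwa [← mul_assoc C] at h
  · rw [rzSqrtKSymbol_eq_zero hχ hlam j hξ, Complex.ofReal_zero]
  · rw [Complex.norm_real]
    refine (abs_rzSqrtKSymbol_le hχ hlam j ξ).trans ?_
    gcongr
    linarith

theorem measurable_rzSqrtKSymbol (hχ : IsCutoff χ) (hlam : 0 < lam) (j : Fin d) :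
    Measurable fun ξ => (rzSqrtKSymbol χ lam j ξ : ℂ) :=
  (Complex.continuous_ofReal.comp (contDiff_rzSqrtKSymbol hχ hlam j).continuous).measurable

theorem eLpNorm_rzSqrtK_proj_le (hχ : IsCutoff χ) (hlam : 0 < lam) (j : Fin d)
    (f : Euc d → ℂ) :
    eLpNorm (mulOp (fun ξ => ((rzSym j ξ * √(Ksym ξ) : ℝ) : ℂ)) (proj χ lam f)) 2 volume ≤
      ENNReal.ofReal (3 * jap lam ^ (-(1 : ℝ) / 2)) * eLpNorm (proj χ lam f) 2 volume := by
  rw [mulOp_rzSqrtK_proj_eq hχ hlam]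
  refine eLpNorm_mulOp_le (R := 4 * lam) (measurable_rzSqrtKSymbol hχ hlam j) (fun ξ => ?_)
    (fun ξ hξ => ?_) _
  · rw [Complex.norm_real]
    exact abs_rzSqrtKSymbol_le hχ hlam j ξ
  · rw [rzSqrtKSymbol_eq_zero hχ hlam j hξ, Complex.ofReal_zero]

theorem continuous_mulOp_rzSqrtK_proj (hχ : IsCutoff χ) (hlam : 0 < lam) (j : Fin d)
    (f : Euc d → ℂ) :
    Continuous (mulOp (fun ξ => ((rzSym j ξ * √(Ksym ξ) : ℝ) : ℂ)) (proj χ lam f)) := by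
  rw [mulOp_rzSqrtK_proj_eq hχ hlam]
  refine continuous_mulOp (R := 4 * lam) (measurable_rzSqrtKSymbol hχ hlam j)
    (A := 3 * jap lam ^ (-(1 : ℝ) / 2)) (fun ξ => ?_) (fun ξ hξ => ?_) _
  · rw [Complex.norm_real]
    exact abs_rzSqrtKSymbol_le hχ hlam j ξ
  · rw [rzSqrtKSymbol_eq_zero hχ hlam j hξ, Complex.ofReal_zero]

theorem measurable_rho_div (hχ : IsCutoff χ) (lam : ℝ) :
    Measurable fun ξ : Euc d => rho χ (‖ξ‖ / lam) :=
  ((contDiff_rho hχ).continuous.comp (continuous_norm.div_const lam)).measurable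

theorem continuous_proj (hχ : IsCutoff χ) (hlam : 0 < lam) (f : Euc d → ℂ) :
    Continuous (proj χ lam f) := by
  have hm : Measurable fun ξ : Euc d => (rho χ (‖ξ‖ / lam) : ℂ) :=
    Complex.measurable_ofReal.comp (measurable_rho_div hχ lam)
  refine continuous_mulOp (A := 1) (R := 2 * lam) hm (fun ξ => ?_) (fun ξ hξ => ?_) f
  · rw [Complex.norm_real]
    exact hχ.abs_sub_le_one _ _
  · rw [rho_div_eq_zero_of_gt hχ hlam hξ, Complex.ofReal_zero]

/-- The symbol of `|D| K P_λ 𝓡_j` is measurable, bounded by `1` and compactly supported. -/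
theorem outer_symbol_bounds (hχ : IsCutoff χ) (hlam : 0 < lam) (j : Fin d) :
    Measurable (fun ξ : Euc d =>
      ((‖ξ‖ * Ksym ξ * rho χ (‖ξ‖ / lam) * rzSym j ξ : ℝ) : ℂ)) ∧
    (∀ ξ : Euc d, ‖((‖ξ‖ * Ksym ξ * rho χ (‖ξ‖ / lam) * rzSym j ξ : ℝ) : ℂ)‖ ≤ 1) ∧
    ∀ ξ : Euc d, 2 * lam < ‖ξ‖ →
      ((‖ξ‖ * Ksym ξ * rho χ (‖ξ‖ / lam) * rzSym j ξ : ℝ) : ℂ) = 0 := by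
  refine ⟨Complex.measurable_ofReal.comp ?_, fun ξ => ?_, fun ξ hξ => ?_⟩
  · have htanh : Measurable Real.tanh := (contDiff_tanh (n := 0)).continuous.measurable
    have hcoord : Measurable fun ξ : Euc d => ξ j :=
      (EuclideanSpace.proj j : Euc d →L[ℝ] ℝ).continuous.measurable
    exact ((measurable_norm.mul ((htanh.comp measurable_norm).div measurable_norm)).mul
      (measurable_rho_div hχ lam)).mul (hcoord.div measurable_norm)
  · rw [Complex.norm_real, norm_mul, norm_mul]
    have h1 : ‖‖ξ‖ * Ksym ξ‖ ≤ 1 := by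
      rcases (norm_nonneg ξ).eq_or_lt with h | h
      · simp [← h]
      · rw [Ksym, mul_div_cancel₀ _ h.ne', Real.norm_of_nonneg (tanh_pos_of_pos h).le]
        exact (Real.tanh_lt_one _).le
    have h2 : ‖rho χ (‖ξ‖ / lam)‖ ≤ 1 := hχ.abs_sub_le_one _ _
    have h3 : ‖rzSym j ξ‖ ≤ 1 := by
      rw [rzSym, norm_div, norm_norm]
      exact div_le_one_of_le₀ (PiLp.norm_apply_le ξ j) (norm_nonneg _)
    exact mul_le_one₀ (mul_le_one₀ h1 (norm_nonneg _) h2) (norm_nonneg _) h3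
  · rw [rho_div_eq_zero_of_gt hχ hlam hξ]
    simp

end Proj

theorem eLpNorm_mul_le_of_enorm_le {d : ℕ} {a b : Euc d → ℂ} {c : ℝ≥0∞}
    (hb : AEStronglyMeasurable b volume) (ha : ∀ x, ‖a x‖ₑ ≤ c) :
    eLpNorm (fun x => a x * b x) 2 volume ≤ c * eLpNorm b 2 volume := by
  refine (eLpNorm_smul_le_eLpNorm_top_mul_eLpNorm 2 hb a).trans ?_
  gcongr
  rw [eLpNorm_exponent_top]
  exact eLpNormEssSup_le_of_ae_enorm_bound (Filter.Eventually.of_forall ha)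

section FixedTime

variable {d : ℕ} {χ : ℝ → ℝ}

/-- The bilinear expression `|D| K P_{λ₀} 𝓡 · (P_{λ₁} f 𝓡 √K P_{λ₂} g)`. -/
def bilinearRz (χ : ℝ → ℝ) (lam₀ lam₁ lam₂ : ℝ) (f g : Euc d → ℂ) : Euc d → ℂ := fun x =>
  ∑ j : Fin d, mulOp (fun ξ => ((‖ξ‖ * Ksym ξ * rho χ (‖ξ‖ / lam₀) * rzSym j ξ : ℝ) : ℂ))
    (fun y => proj χ lam₁ f y *
      mulOp (fun ξ => ((rzSym j ξ * √(Ksym ξ) : ℝ) : ℂ)) (proj χ lam₂ g) y) x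

theorem eLpNorm_bilinearRz_le (hχ : IsCutoff χ) {lam₀ lam₁ lam₂ : ℝ} (h₀ : 0 < lam₀)
    (f g : Euc d → ℂ) {B : ℝ≥0∞}
    (hB : ∀ j : Fin d, eLpNorm (fun y => proj χ lam₁ f y *
      mulOp (fun ξ => ((rzSym j ξ * √(Ksym ξ) : ℝ) : ℂ)) (proj χ lam₂ g) y) 2 volume ≤ B) :
    eLpNorm (bilinearRz χ lam₀ lam₁ lam₂ f g) 2 volume ≤ d * B := by
  have hsum : bilinearRz χ lam₀ lam₁ lam₂ f g = ∑ j : Fin d,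
      mulOp (fun ξ => ((‖ξ‖ * Ksym ξ * rho χ (‖ξ‖ / lam₀) * rzSym j ξ : ℝ) : ℂ))
      (fun y => proj χ lam₁ f y *
        mulOp (fun ξ => ((rzSym j ξ * √(Ksym ξ) : ℝ) : ℂ)) (proj χ lam₂ g) y) := by
    ext x
    rw [bilinearRz, Finset.sum_apply]
  rw [hsum]
  refine (eLpNorm_sum_le (fun j _ => ?_) (by norm_num)).trans ?_
  · obtain ⟨hm, hA, hR⟩ := outer_symbol_bounds hχ h₀ j
    exact (continuous_mulOp hm hA hR _).aestronglyMeasurable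
  · refine (Finset.sum_le_sum (g := fun _ => B) fun j _ => ?_).trans_eq (by simp)
    obtain ⟨hm, hA, hR⟩ := outer_symbol_bounds hχ h₀ j
    refine (eLpNorm_mulOp_le hm hA hR _).trans ?_
    rw [ENNReal.ofReal_one, one_mul]
    exact hB j

/-- The bilinear estimate at fixed time, with either factor in `L^r`. -/
theorem exists_bilinearRz_bound (d : ℕ) (hd : 2 ≤ d) (q : ℝ) (hq : 2 < q) (hχ : IsCutoff χ) :
    ∃ C : ℝ, 0 ≤ C ∧ ∀ lam₀ lam₁ lam₂ : ℝ, 0 < lam₀ → 0 < lam₁ → 0 < lam₂ →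
      ∀ f g : Euc d → ℂ,
      eLpNorm (bilinearRz χ lam₀ lam₁ lam₂ f g) 2 volume ≤
        ENNReal.ofReal (C * jap lam₂ ^ (-(1 : ℝ) / 2) * lam₁ ^ ((d : ℝ) / 2 - 2 / q)) *
          (eLpNorm (proj χ lam₂ g) 2 volume *
            eLpNorm (proj χ lam₁ f) (ENNReal.ofReal (2 * q * d / (q * d - 4))) volume) ∧
      eLpNorm (bilinearRz χ lam₀ lam₁ lam₂ f g) 2 volume ≤
        ENNReal.ofReal (C * jap lam₂ ^ (-(1 : ℝ) / 2) * lam₂ ^ ((d : ℝ) / 2 - 2 / q)) *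
          (eLpNorm (proj χ lam₁ f) 2 volume *
            eLpNorm (proj χ lam₂ g) (ENNReal.ofReal (2 * q * d / (q * d - 4))) volume) := by
  obtain ⟨C₁, hC₁, hP⟩ := exists_enorm_proj_le d hd q hq hχ
  obtain ⟨C₂, hC₂, hK⟩ := exists_enorm_rzSqrtK_proj_le d hd q hq hχ
  refine ⟨d * (3 * C₁ + C₂), by positivity, fun lam₀ lam₁ lam₂ h₀ h₁ h₂ f g => ?_⟩
  have hJ : 0 ≤ jap lam₂ ^ (-(1 : ℝ) / 2) := Real.rpow_nonneg (Real.sqrt_nonneg _) _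
  constructor
  · refine (eLpNorm_bilinearRz_le hχ h₀ f g fun j =>
      (eLpNorm_mul_le_of_enorm_le (continuous_mulOp_rzSqrtK_proj hχ h₂ j g).aestronglyMeasurable
        (hP lam₁ h₁ f)).trans (mul_le_mul_right (eLpNorm_rzSqrtK_proj_le hχ h₂ j g) _)).trans ?_
    have hr : 0 ≤ lam₁ ^ ((d : ℝ) / 2 - 2 / q) := Real.rpow_nonneg h₁.le _
    set X := eLpNorm (proj χ lam₁ f) (ENNReal.ofReal (2 * q * d / (q * d - 4))) volume
    set Y := eLpNorm (proj χ lam₂ g) 2 volume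
    calc (d : ℝ≥0∞) * (ENNReal.ofReal (C₁ * lam₁ ^ ((d : ℝ) / 2 - 2 / q)) * X *
          (ENNReal.ofReal (3 * jap lam₂ ^ (-(1 : ℝ) / 2)) * Y))
        = ENNReal.ofReal (d * ((C₁ * lam₁ ^ ((d : ℝ) / 2 - 2 / q)) *
            (3 * jap lam₂ ^ (-(1 : ℝ) / 2)))) * (Y * X) := by
          rw [ENNReal.ofReal_mul (p := (d : ℝ)) (by positivity), ENNReal.ofReal_natCast,
            ENNReal.ofReal_mul (p := C₁ * _) (by positivity)]
          ring
      _ ≤ _ := by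
          gcongr ENNReal.ofReal ?_ * _
          have : 0 ≤ d * C₂ * jap lam₂ ^ (-(1 : ℝ) / 2) * lam₁ ^ ((d : ℝ) / 2 - 2 / q) := by
            positivity
          nlinarith
  · refine (eLpNorm_bilinearRz_le hχ h₀ f g
      (B := ENNReal.ofReal (C₂ * jap lam₂ ^ (-(1 : ℝ) / 2) * lam₂ ^ ((d : ℝ) / 2 - 2 / q)) *
        eLpNorm (proj χ lam₂ g) (ENNReal.ofReal (2 * q * d / (q * d - 4))) volume *
        eLpNorm (proj χ lam₁ f) 2 volume) fun j => ?_).trans ?_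
    · simp_rw [mul_comm (proj χ lam₁ f _)]
      exact eLpNorm_mul_le_of_enorm_le (continuous_proj hχ h₁ f).aestronglyMeasurable
        (hK lam₂ h₂ j g)
    · have hr : 0 ≤ lam₂ ^ ((d : ℝ) / 2 - 2 / q) := Real.rpow_nonneg h₂.le _
      set X := eLpNorm (proj χ lam₂ g) (ENNReal.ofReal (2 * q * d / (q * d - 4))) volume
      set Y := eLpNorm (proj χ lam₁ f) 2 volume
      calc (d : ℝ≥0∞) * (ENNReal.ofReal (C₂ * jap lam₂ ^ (-(1 : ℝ) / 2) *
            lam₂ ^ ((d : ℝ) / 2 - 2 / q)) * X * Y)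
          = ENNReal.ofReal (d * (C₂ * jap lam₂ ^ (-(1 : ℝ) / 2) *
              lam₂ ^ ((d : ℝ) / 2 - 2 / q))) * (Y * X) := by
            rw [ENNReal.ofReal_mul (p := (d : ℝ)) (by positivity), ENNReal.ofReal_natCast]
            ring
        _ ≤ _ := by
            gcongr ENNReal.ofReal ?_ * _
            have : 0 ≤ d * C₁ * jap lam₂ ^ (-(1 : ℝ) / 2) * lam₂ ^ ((d : ℝ) / 2 - 2 / q) := by
              positivity
            nlinarith

end FixedTime

/-- Hölder's inequality in time against the constant `1`, without measurability. -/
theorem lintegral_Ioc_le_rpow_mul {T q : ℝ} (hT : 0 < T) (hq : 1 < q) (B : ℝ → ℝ≥0∞) :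
    ∫⁻ t in Set.Ioc (0 : ℝ) T, B t ≤
      ENNReal.ofReal (T ^ (1 - 1 / q)) * (∫⁻ t in Set.Ioc (0 : ℝ) T, B t ^ q) ^ (1 / q) := by
  obtain ⟨g, hgm, hgB, hgI⟩ :=
    exists_measurable_le_lintegral_eq (volume.restrict (Set.Ioc (0 : ℝ) T)) B
  rw [hgI]
  have hpq : q.HolderConjugate (q / (q - 1)) := Real.HolderConjugate.conjExponent hq
  have h := ENNReal.lintegral_mul_le_Lp_mul_Lq (volume.restrict (Set.Ioc (0 : ℝ) T)) hpq
    hgm.aemeasurable (aemeasurable_const (b := (1 : ℝ≥0∞)))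
  simp only [Pi.mul_apply, mul_one, ENNReal.one_rpow, lintegral_const, one_mul,
    Measure.restrict_apply MeasurableSet.univ, Set.univ_inter, Real.volume_Ioc, sub_zero] at h
  refine h.trans ?_
  have he : 1 / (q / (q - 1)) = 1 - 1 / q := by
    field_simp
  rw [he, ENNReal.ofReal_rpow_of_pos hT, mul_comm]
  gcongr with t
  exact hgB t

theorem essSup_le_XlamNorm {d : ℕ} (χ : ℝ → ℝ) (T q lam : ℝ) (u : ℝ → Euc d → ℂ) :
    essSup (fun t => eLpNorm (proj χ lam (u t)) 2 volume)
      (volume.restrict (Set.Ioc (0 : ℝ) T)) ≤ XlamNorm χ T q lam u := by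
  rw [XlamNorm]
  refine le_trans (le_of_eq ?_) (ENNReal.rpow_le_rpow le_self_add (by norm_num))
  rw [← ENNReal.rpow_natCast, ← ENNReal.rpow_mul]
  norm_num

theorem lintegral_rpow_le_XlamNorm {d : ℕ} (χ : ℝ → ℝ) (T q lam : ℝ) (u : ℝ → Euc d → ℂ) :
    (∫⁻ t in Set.Ioc (0 : ℝ) T, eLpNorm (proj χ lam (u t))
      (ENNReal.ofReal (2 * q * d / (q * d - 4))) volume ^ q) ^ (1 / q) ≤
      ENNReal.ofReal (jap lam ^ (3 / (2 * q))) * XlamNorm χ T q lam u := by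
  have hj : 0 < jap lam := Real.sqrt_pos.2 (by positivity)
  rw [XlamNorm]
  refine le_trans (le_of_eq ?_)
    (mul_le_mul_right (ENNReal.rpow_le_rpow le_add_self (by norm_num)) _)
  rw [ENNReal.mul_rpow_of_nonneg _ _ (by norm_num), ← ENNReal.rpow_natCast,
    ← ENNReal.rpow_mul _ _ ((1 : ℝ) / 2), ENNReal.ofReal_rpow_of_pos (by positivity),
    ← mul_assoc, ← ENNReal.ofReal_mul (by positivity), ← Real.rpow_mul hj.le,
    ← Real.rpow_add hj]
  rw [show 3 / (2 * q) + -3 / q * (1 / 2) = 0 by ring]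
  norm_num

/-- Integration in time of a product bound, with one factor in `L^∞_T L²` and the other in
`L^q_T L^r`. -/
theorem lintegral_le_mul_XlamNorm {d : ℕ} (hd : 2 ≤ d) {q : ℝ} (hq : 2 < q) {χ : ℝ → ℝ}
    {T : ℝ} (hT : 0 < T) {C J lam mu : ℝ} (hC : 0 ≤ C) (hJ : 0 ≤ J) (hlam : 0 < lam)
    {u v : ℝ → Euc d → ℂ} (hv : XlamNorm χ T q mu v ≠ ⊤) {Φ : ℝ → ℝ≥0∞}
    (hΦ : ∀ t, Φ t ≤ ENNReal.ofReal (C * J * lam ^ ((d : ℝ) / 2 - 2 / q)) *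
      (eLpNorm (proj χ mu (v t)) 2 volume * eLpNorm (proj χ lam (u t))
        (ENNReal.ofReal (2 * q * d / (q * d - 4))) volume)) :
    ∫⁻ t in Set.Ioc (0 : ℝ) T, Φ t ≤
      ENNReal.ofReal (C * T ^ (1 - 1 / q) * jap lam ^ ((d : ℝ) / 2 - 1 / (2 * q)) * J) *
        XlamNorm χ T q lam u * XlamNorm χ T q mu v := by
  have hj : 0 < jap lam := Real.sqrt_pos.2 (by positivity)
  have hlj : lam ≤ jap lam := Real.le_sqrt_of_sq_le (by linarith)
  have hd' : (2 : ℝ) ≤ d := by exact_mod_cast hd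
  have he : 0 ≤ (d : ℝ) / 2 - 2 / q := by
    have : 2 / q ≤ 1 := (div_le_one (by linarith)).2 hq.le
    linarith
  have hTq : 0 ≤ T ^ (1 - 1 / q) := Real.rpow_nonneg hT.le _
  set X := XlamNorm χ T q lam u
  set Y := XlamNorm χ T q mu v
  set B : ℝ → ℝ≥0∞ := fun t => eLpNorm (proj χ lam (u t))
        (ENNReal.ofReal (2 * q * d / (q * d - 4))) volume
  set c : ℝ := C * J * jap lam ^ ((d : ℝ) / 2 - 2 / q) with hc
  have hae : ∀ᵐ t ∂(volume.restrict (Set.Ioc (0 : ℝ) T)),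
      Φ t ≤ ENNReal.ofReal c * Y * B t := by
    filter_upwards [ENNReal.ae_le_essSup (μ := volume.restrict (Set.Ioc (0 : ℝ) T))
      (fun t => eLpNorm (proj χ mu (v t)) 2 volume)] with t ht
    refine (hΦ t).trans ?_
    rw [mul_assoc (ENNReal.ofReal c)]
    gcongr ENNReal.ofReal ?_ * (?_ * B t)
    · rw [hc]
      gcongr
    · exact ht.trans (essSup_le_XlamNorm χ T q mu v)
  calc ∫⁻ t in Set.Ioc (0 : ℝ) T, Φ t
      ≤ ∫⁻ t in Set.Ioc (0 : ℝ) T, ENNReal.ofReal c * Y * B t := lintegral_mono_ae hae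
    _ = ENNReal.ofReal c * Y * ∫⁻ t in Set.Ioc (0 : ℝ) T, B t :=
        lintegral_const_mul' _ _ (ENNReal.mul_ne_top ENNReal.ofReal_ne_top hv)
    _ ≤ ENNReal.ofReal c * Y * (ENNReal.ofReal (T ^ (1 - 1 / q)) *
          (ENNReal.ofReal (jap lam ^ (3 / (2 * q))) * X)) := by
        refine mul_le_mul_right ((lintegral_Ioc_le_rpow_mul hT (by linarith : 1 < q) B).trans ?_) _
        refine mul_le_mul_right ?_ _
        exact lintegral_rpow_le_XlamNorm χ T q lam u
    _ = ENNReal.ofReal (c * (T ^ (1 - 1 / q) * jap lam ^ (3 / (2 * q)))) * X * Y := by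
        rw [ENNReal.ofReal_mul (p := c) (by positivity), ENNReal.ofReal_mul hTq]
        ring
    _ = _ := by
        congr 3
        have : (d : ℝ) / 2 - 1 / (2 * q) = ((d : ℝ) / 2 - 2 / q) + 3 / (2 * q) := by
          field_simp
          ring
        rw [this, Real.rpow_add hj, hc]
        ring

/-- Lemma 4, first bilinear dyadic estimate:
`‖|D| K P_{λ₀} 𝓡·(u_{λ₁} 𝓡√K v_{λ₂})‖_{L^1_T L^2_x}
≲ T^{1-1/q} min(⟨λ₁⟩,⟨λ₂⟩)^{d/2-1/(2q)} ⟨λ₂⟩^{-1/2} ‖u‖_{X_{λ₁}} ‖v‖_{X_{λ₂}}`,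
with implicit constant independent of `T` and the dyadic numbers `λᵢ = 2^{nᵢ}`. -/
theorem bilinear_dyadic_estimate_one
    (d : ℕ) (hd : 2 ≤ d) (q : ℝ) (hq : 2 < q) (χ : ℝ → ℝ) (hχ : IsCutoff χ) :
    ∃ C > 0, ∀ T : ℝ, 0 < T → ∀ n₀ n₁ n₂ : ℤ, ∀ u v : ℝ → Euc d → ℂ,
      XlamNorm χ T q ((2 : ℝ) ^ n₁) u ≠ ⊤ → XlamNorm χ T q ((2 : ℝ) ^ n₂) v ≠ ⊤ →
      (∫⁻ t in Set.Ioc (0 : ℝ) T,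
          eLpNorm (fun x => ∑ j : Fin d,
            mulOp (fun ξ =>
                ((‖ξ‖ * Ksym ξ * rho χ (‖ξ‖ / (2 : ℝ) ^ n₀) * rzSym j ξ : ℝ) : ℂ))
              (fun y => proj χ ((2 : ℝ) ^ n₁) (u t) y *
                mulOp (fun ξ => ((rzSym j ξ * Real.sqrt (Ksym ξ) : ℝ) : ℂ))
                  (proj χ ((2 : ℝ) ^ n₂) (v t)) y) x) 2 volume) ≤
        ENNReal.ofReal (C * T ^ (1 - 1 / q) *
            min (jap ((2 : ℝ) ^ n₁)) (jap ((2 : ℝ) ^ n₂)) ^ ((d : ℝ) / 2 - 1 / (2 * q)) *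
            jap ((2 : ℝ) ^ n₂) ^ (-(1 : ℝ) / 2)) *
          XlamNorm χ T q ((2 : ℝ) ^ n₁) u * XlamNorm χ T q ((2 : ℝ) ^ n₂) v := by
  obtain ⟨C, hC, hbound⟩ := exists_bilinearRz_bound d hd q hq hχ
  refine ⟨C + 1, by positivity, fun T hT n₀ n₁ n₂ u v hu hv => ?_⟩
  have hpos : ∀ n : ℤ, (0 : ℝ) < 2 ^ n := fun n => by positivity
  have hj : ∀ n : ℤ, 0 < jap ((2 : ℝ) ^ n) := fun n => Real.sqrt_pos.2 (by positivity)
  have hJ : 0 ≤ jap ((2 : ℝ) ^ n₂) ^ (-(1 : ℝ) / 2) := Real.rpow_nonneg (hj n₂).le _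
  have hTq : 0 ≤ T ^ (1 - 1 / q) := Real.rpow_nonneg hT.le _
  have hmain : ∀ t, _ := fun t => hbound _ _ _ (hpos n₀) (hpos n₁) (hpos n₂) (u t) (v t)
  rcases le_total (jap ((2 : ℝ) ^ n₁)) (jap ((2 : ℝ) ^ n₂)) with h | h
  · rw [min_eq_left h]
    refine (lintegral_le_mul_XlamNorm hd hq hT hC hJ (hpos n₁) hv fun t => (hmain t).1).trans ?_
    have := (hj n₁).le
    gcongr
    linarith
  · rw [min_eq_right h]
    refine (lintegral_le_mul_XlamNorm hd hq hT hC hJ (hpos n₂) hu fun t => (hmain t).2).trans ?_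
    have := (hj n₂).le
    rw [mul_right_comm]
    gcongr
    linarith
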